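/- Let G be the graph with vertex set {1,…,9} and edge set {{1,2},{2,3},{2,5},{3,4},{4,5},{3,6},{5,7},{6,7},{6,8},{7,9}}. Then 𝒞(G) = {∅, {2}, {6}, {7}, {2,6}, {2,7}, {3,5}, {3,7}, {5,6}, {6,7}, {2,3,7}, {2,4,6}, {2,4,7}, {2,5,6}, {2,6,7}, {3,5,6}, {3,5,7}, {2,4,6,7}}, the ideal J_G is unmixed of deviation 2 with dim S/J_G = 10 and depth S/J_G = 9; in particular S/J_G is not Cohen–Macaulay. -/

import Mathlib

open MvPolynomial

noncomputable section

/-- The binomial edge ideal of a simple graph `G` on vertex type `V`, inside the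
polynomial ring `K[x_i, y_i : i ∈ V]`, modelled as `MvPolynomial (V ⊕ V) K`
with `x_i = X (Sum.inl i)` and `y_i = X (Sum.inr i)`. -/
def binomialEdgeIdeal (K : Type*) [Field K] {V : Type*} (G : SimpleGraph V) :
    Ideal (MvPolynomial (V ⊕ V) K) :=
  Ideal.span { f | ∃ i j : V, G.Adj i j ∧
    f = X (Sum.inl i) * X (Sum.inr j) - X (Sum.inl j) * X (Sum.inr i) }

/-- The minimal number of generators of an ideal. -/
def mu {R : Type*} [CommRing R] (J : Ideal R) : ℕ :=
  sInf {k | ∃ s : Finset R, s.card = k ∧ Ideal.span (s : Set R) = J}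

/-- The height of an ideal: the infimum of the heights of the primes containing it. -/
def htI {R : Type*} [CommRing R] (I : Ideal R) : ℕ∞ :=
  ⨅ (P : PrimeSpectrum R) (_ : I ≤ P.asIdeal), Order.height P

/-- An ideal is unmixed if all of its minimal primes have height equal to its height. -/
def IsUnmixed {R : Type*} [CommRing R] (I : Ideal R) : Prop :=
  ∀ P ∈ I.minimalPrimes, htI P = htI I

/-- The depth of a ring `R` with respect to an ideal `m`: the supremum of the
lengths of regular sequences on `R` consisting of elements of `m`. -/
def ringDepth (R : Type*) [CommRing R] (m : Ideal R) : ℕ∞ :=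
  sSup {d : ℕ∞ | ∃ l : List R, (l.length : ℕ∞) = d ∧ (∀ x ∈ l, x ∈ m) ∧
    RingTheory.Sequence.IsRegular R l}

/-- The graded maximal ideal of the quotient of a polynomial ring by an ideal `J`:
the image of the ideal generated by all the variables. -/
def gradedMaxQuot {K σ : Type*} [Field K] (J : Ideal (MvPolynomial σ K)) :
    Ideal (MvPolynomial σ K ⧸ J) :=
  (Ideal.span (Set.range (X : σ → MvPolynomial σ K))).map (Ideal.Quotient.mk J)

/-- `S/J` is Cohen–Macaulay: its depth with respect to the graded maximal ideal
equals its Krull dimension. -/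
def IsCMQuot {K σ : Type*} [Field K] (J : Ideal (MvPolynomial σ K)) : Prop :=
  (ringDepth (MvPolynomial σ K ⧸ J) (gradedMaxQuot J) : WithBot ℕ∞) =
    ringKrullDim (MvPolynomial σ K ⧸ J)

/-- A graph is a path graph if its vertices can be ordered `v_1, …, v_m` so that
its edges are exactly `{v_i, v_{i+1}}` for `1 ≤ i ≤ m - 1`. -/
def IsPathGraph {V : Type*} (H : SimpleGraph V) : Prop :=
  ∃ (m : ℕ) (e : V ≃ Fin m), ∀ a b : V,
    H.Adj a b ↔ ((e a : ℕ) + 1 = (e b : ℕ) ∨ (e b : ℕ) + 1 = (e a : ℕ))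

/-- The vertex set of a connected component, as a set of vertices. -/
def compSupp {V : Type*} (G : SimpleGraph V) (c : G.ConnectedComponent) : Set V :=
  {v | G.connectedComponentMk v = c}

end

noncomputable section

/-- The prime `P_T(G)` associated with a subset `T` of the vertices: it is generated
by the variables `x_i, y_i` for `i ∈ T` together with the binomial edge ideals of the
complete graphs on the connected components of the subgraph of `G` induced on the
complement of `T` (i.e. all `2`-minors `x_i y_j - x_j y_i` for distinct vertices
`i, j ∉ T` lying in the same connected component of that induced subgraph). -/
def PTIdeal (K : Type*) [Field K] {n : ℕ} (G : SimpleGraph (Fin n)) (T : Set (Fin n)) :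
    Ideal (MvPolynomial (Fin n ⊕ Fin n) K) :=
  Ideal.span
    ({ f | ∃ i ∈ T, f = X (Sum.inl i) } ∪ { f | ∃ i ∈ T, f = X (Sum.inr i) } ∪
      { f | ∃ (i j : Fin n) (hi : i ∈ Tᶜ) (hj : j ∈ Tᶜ), i ≠ j ∧
        (G.induce Tᶜ).Reachable ⟨i, hi⟩ ⟨j, hj⟩ ∧
        f = X (Sum.inl i) * X (Sum.inr j) - X (Sum.inl j) * X (Sum.inr i) })

/-- The number of connected components of the subgraph of `G` induced on `U`. -/
def cNum {n : ℕ} (G : SimpleGraph (Fin n)) (U : Set (Fin n)) : ℕ :=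
  Nat.card (G.induce U).ConnectedComponent

/-- `T` has the cutpoint property for `G`: every `i ∈ T` is a cutpoint of the
subgraph of `G` induced on `([n] ∖ T) ∪ {i}`, i.e. removing `i` from that graph
increases the number of connected components. -/
def HasCutpointProperty {n : ℕ} (G : SimpleGraph (Fin n)) (T : Set (Fin n)) : Prop :=
  ∀ i ∈ T, cNum G (Tᶜ ∪ {i}) < cNum G Tᶜ

/-- The graph with vertex set `{1,…,9}` (modelled as `Fin 9`, vertex `i`
corresponding to `i - 1`) and edge set
`{{1,2},{2,3},{2,5},{3,4},{4,5},{3,6},{5,7},{6,7},{6,8},{7,9}}`. -/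
def nineVertexExample : SimpleGraph (Fin 9) :=
  SimpleGraph.fromRel (fun a b =>
    (a, b) ∈ ([(0, 1), (1, 2), (1, 4), (2, 3), (3, 4), (2, 5), (4, 6), (5, 6),
      (5, 7), (6, 8)] : List (Fin 9 × Fin 9)))

section CliqueIdeal

variable (K : Type*) [Field K] {V : Type*}

/-- The `2`-minor `x_i y_j - x_j y_i` of the generic `2 × V` matrix. -/
def edgeMinor (i j : V) : MvPolynomial (V ⊕ V) K :=
  X (Sum.inl i) * X (Sum.inr j) - X (Sum.inl j) * X (Sum.inr i)

/-- The ideal generated by the variables `x_i` (`i ∈ A`), the variables `y_i` (`i ∈ B`), and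
the `2`-minors indexed by pairs of vertices outside `A` which carry the same label. -/
def cliqueIdeal (A B : Set V) (c : V → ℕ) : Ideal (MvPolynomial (V ⊕ V) K) :=
  Ideal.span ({ f | ∃ i ∈ A, f = X (Sum.inl i) } ∪ { f | ∃ i ∈ B, f = X (Sum.inr i) } ∪
    { f | ∃ i j, i ∉ A ∧ j ∉ A ∧ c i = c j ∧ f = edgeMinor K i j })

variable {K}

theorem X_inl_mem_cliqueIdeal {A : Set V} (B : Set V) (c : V → ℕ) {i : V} (hi : i ∈ A) :
    X (Sum.inl i) ∈ cliqueIdeal K A B c :=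
  Ideal.subset_span (Or.inl (Or.inl ⟨i, hi, rfl⟩))

theorem X_inr_mem_cliqueIdeal (A : Set V) {B : Set V} (c : V → ℕ) {i : V} (hi : i ∈ B) :
    X (Sum.inr i) ∈ cliqueIdeal K A B c :=
  Ideal.subset_span (Or.inl (Or.inr ⟨i, hi, rfl⟩))

theorem edgeMinor_mem_cliqueIdeal {A : Set V} (B : Set V) {c : V → ℕ} {i j : V} (hi : i ∉ A)
    (hj : j ∉ A) (h : c i = c j) : edgeMinor K i j ∈ cliqueIdeal K A B c :=
  Ideal.subset_span (Or.inr ⟨i, j, hi, hj, h, rfl⟩)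

theorem cliqueIdeal_le_iff {A B : Set V} {c : V → ℕ} {I : Ideal (MvPolynomial (V ⊕ V) K)} :
    cliqueIdeal K A B c ≤ I ↔ (∀ i ∈ A, X (Sum.inl i) ∈ I) ∧ (∀ i ∈ B, X (Sum.inr i) ∈ I) ∧
      ∀ i j, i ∉ A → j ∉ A → c i = c j → edgeMinor K i j ∈ I := by
  constructor
  · intro h
    exact ⟨fun i hi => h (X_inl_mem_cliqueIdeal B c hi),
      fun i hi => h (X_inr_mem_cliqueIdeal A c hi),
      fun i j hi hj hc => h (edgeMinor_mem_cliqueIdeal B hi hj hc)⟩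
  · rintro ⟨h1, h2, h3⟩
    refine Ideal.span_le.2 ?_
    rintro f ((⟨i, hi, rfl⟩ | ⟨i, hi, rfl⟩) | ⟨i, j, hi, hj, hc, rfl⟩)
    exacts [h1 i hi, h2 i hi, h3 i j hi hj hc]

/-- The exponent vector of the image of a variable under `x_i ↦ a_i s_{c i}`,
`y_i ↦ a_i t_{c i}`. -/
def paramExponent (c : V → ℕ) : V ⊕ V → (V ⊕ ℕ ⊕ ℕ →₀ ℕ)
  | Sum.inl i => Finsupp.single (Sum.inl i) 1 + Finsupp.single (Sum.inr (Sum.inl (c i))) 1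
  | Sum.inr i => Finsupp.single (Sum.inl i) 1 + Finsupp.single (Sum.inr (Sum.inr (c i))) 1

/-- The variables which are set to zero. -/
def deadVars (A B : Set V) : Set (V ⊕ V) := Sum.elim A B

open Classical in
/-- The parametrization `x_i ↦ a_i s_{c i}`, `y_i ↦ a_i t_{c i}` of the zero locus of a clique
ideal, where the variables in `A` and `B` are sent to zero. -/
def cliqueParam (A B : Set V) (c : V → ℕ) :
    MvPolynomial (V ⊕ V) K →ₐ[K] MvPolynomial (V ⊕ ℕ ⊕ ℕ) K :=
  aeval fun v => if v ∈ deadVars A B then 0 else monomial (paramExponent c v) 1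

theorem cliqueParam_monomial_of_dead {A B : Set V} (c : V → ℕ) {m : V ⊕ V →₀ ℕ} {v : V ⊕ V}
    (hv : v ∈ deadVars A B) (hm : m v ≠ 0) :
    cliqueParam A B c (monomial m (1 : K)) = 0 := by
  rw [cliqueParam, aeval_monomial, map_one, one_mul]
  exact Finset.prod_eq_zero (Finsupp.mem_support_iff.2 hm) (by simp [hv, hm])

variable [Fintype V]

/-- The exponent vector of the image of a monomial. -/
def paramDegree (c : V → ℕ) (m : V ⊕ V →₀ ℕ) : V ⊕ ℕ ⊕ ℕ →₀ ℕ :=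
  ∑ v, m v • paramExponent c v

theorem cliqueParam_monomial_of_alive {A B : Set V} (c : V → ℕ) {m : V ⊕ V →₀ ℕ}
    (hm : ∀ v ∈ deadVars A B, m v = 0) :
    cliqueParam A B c (monomial m (1 : K)) = monomial (paramDegree c m) 1 := by
  rw [cliqueParam, aeval_monomial, map_one, one_mul, paramDegree,
    Finsupp.prod_fintype _ _ (by simp)]
  rw [monomial_sum_one]
  refine Finset.prod_congr rfl fun v _ => ?_
  by_cases hv : v ∈ deadVars A B
  · simp [hm v hv]
  · simp [hv, monomial_pow]

theorem paramDegree_inl (c : V → ℕ) (m : V ⊕ V →₀ ℕ) (i : V) :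
    paramDegree c m (Sum.inl i) = m (Sum.inl i) + m (Sum.inr i) := by
  classical
  simp [paramDegree, paramExponent, Finsupp.single_apply]

theorem paramDegree_inr_inl (c : V → ℕ) (m : V ⊕ V →₀ ℕ) (l : ℕ) :
    paramDegree c m (Sum.inr (Sum.inl l)) = ∑ i with c i = l, m (Sum.inl i) := by
  classical
  simp [paramDegree, paramExponent, Finsupp.single_apply, Finset.sum_filter]

/-- Two monomials in the surviving variables with the same image under the parametrization are
congruent modulo the clique ideal. -/
theorem monomial_sub_monomial_mem_cliqueIdeal {A B : Set V} (hBA : B ⊆ A) (c : V → ℕ)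
    (m m' : V ⊕ V →₀ ℕ) (hm : ∀ v ∈ deadVars A B, m v = 0)
    (hm' : ∀ v ∈ deadVars A B, m' v = 0) (h : paramDegree c m = paramDegree c m') :
    monomial m (1 : K) - monomial m' 1 ∈ cliqueIdeal K A B c := by
  classical
  induction hN : ∑ i, (m (Sum.inl i) - m' (Sum.inl i)) using Nat.strong_induction_on
    generalizing m with
  | _ N ih =>
    have hsum (i : V) : m (Sum.inl i) + m (Sum.inr i) = m' (Sum.inl i) + m' (Sum.inr i) := by
      rw [← paramDegree_inl c m, ← paramDegree_inl c m', h]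
    have hcls (l : ℕ) : ∑ i with c i = l, m (Sum.inl i) = ∑ i with c i = l, m' (Sum.inl i) := by
      rw [← paramDegree_inr_inl c m, ← paramDegree_inr_inl c m', h]
    by_cases hle : ∀ i, m (Sum.inl i) ≤ m' (Sum.inl i)
    · have heq (i : V) : m (Sum.inl i) = m' (Sum.inl i) :=
        (Finset.sum_eq_sum_iff_of_le fun j _ => hle j).1 (hcls (c i)) i (by simp)
      have : m = m' := by
        ext (i | i)
        · exact heq i
        · have := hsum i
          have := heq i
          omega
      simp [this]
    · push Not at hle
      obtain ⟨j, hj⟩ := hle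
      obtain ⟨k, hck, hk⟩ : ∃ k, c k = c j ∧ m (Sum.inl k) < m' (Sum.inl k) := by
        by_contra! hcon
        have := Finset.sum_lt_sum (s := Finset.univ.filter fun i => c i = c j)
          (f := fun i => m' (Sum.inl i)) (g := fun i => m (Sum.inl i))
          (fun i hi => hcon i (by simpa using hi)) ⟨j, by simp, hj⟩
        exact this.ne (hcls (c j)).symm
      have hjA : j ∉ A := fun hjA => by
        have := hm (Sum.inl j) hjA
        omega
      have hkA : k ∉ A := fun hkA => by
        have := hm' (Sum.inl k) hkA
        omega
      have hjk : j ≠ k := by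
        rintro rfl
        omega
      have hkr : 1 ≤ m (Sum.inr k) := by
        have := hsum k
        omega
      have hjB : j ∉ B := fun h => hjA (hBA h)
      obtain ⟨q, hq⟩ : ∃ q : V ⊕ V →₀ ℕ,
          m = q + (Finsupp.single (Sum.inl j) 1 + Finsupp.single (Sum.inr k) 1) := by
        refine ⟨m - (Finsupp.single (Sum.inl j) 1 + Finsupp.single (Sum.inr k) 1),
          (tsub_add_cancel_of_le ?_).symm⟩
        rintro (i | i)
        · by_cases hi : j = i
          · subst hi
            simp
            omega
          · simp [hi]
        · by_cases hi : k = i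
          · subst hi
            simpa using hkr
          · simp [hi]
      set m₁ : V ⊕ V →₀ ℕ :=
        q + (Finsupp.single (Sum.inl k) 1 + Finsupp.single (Sum.inr j) 1) with hm₁
      have hstep : monomial m (1 : K) - monomial m₁ 1 ∈ cliqueIdeal K A B c := by
        have : monomial m (1 : K) - monomial m₁ 1 = monomial q 1 * edgeMinor K j k := by
          rw [hq, hm₁, edgeMinor, mul_sub]
          simp only [X, monomial_mul, one_mul]
        rw [this]
        exact Ideal.mul_mem_left _ _ (edgeMinor_mem_cliqueIdeal B hjA hkA hck.symm)
      have hdeg : paramDegree c m₁ = paramDegree c m := by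
        have hadd (a b : V ⊕ V →₀ ℕ) :
            paramDegree c (a + b) = paramDegree c a + paramDegree c b := by
          simp [paramDegree, add_smul, Finset.sum_add_distrib]
        have hsingle (v : V ⊕ V) :
            paramDegree c (Finsupp.single v 1) = paramExponent c v := by
          simp [paramDegree, Finsupp.single_apply]
        rw [hm₁, hq, hadd, hadd, hadd, hadd, hsingle, hsingle, hsingle, hsingle]
        simp only [paramExponent, hck]
        abel
      have hdead : ∀ v ∈ deadVars A B, m₁ v = 0 := by
        intro v hv
        have hqv : q v = 0 := by
          have := hm v hv
          rw [hq] at this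
          simp at this
          exact this.1
        rcases v with i | i
        · have : k ≠ i := by
            rintro rfl
            exact hkA hv
          simp [hm₁, hqv, this]
        · have : j ≠ i := by
            rintro rfl
            exact hjB hv
          simp [hm₁, hqv, this]
      have hlt : ∑ i, (m₁ (Sum.inl i) - m' (Sum.inl i)) < N := by
        rw [← hN]
        have hval (i : V) : m (Sum.inl i) = q (Sum.inl i) + if j = i then 1 else 0 := by
          simp [hq, Finsupp.single_apply]
        have hval₁ (i : V) : m₁ (Sum.inl i) = q (Sum.inl i) + if k = i then 1 else 0 := by
          simp [hm₁, Finsupp.single_apply]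
        refine Finset.sum_lt_sum (fun i _ => ?_) ⟨j, Finset.mem_univ _, ?_⟩
        · have h1 := hval i
          have h2 := hval₁ i
          by_cases hi : k = i
          · subst hi
            rw [if_neg hjk] at h1
            rw [if_pos rfl] at h2
            omega
          · rw [if_neg hi] at h2
            omega
        · have h1 := hval j
          have h2 := hval₁ j
          rw [if_neg hjk.symm] at h2
          rw [if_pos rfl] at h1
          omega
      have := ih _ hlt m₁ hdead (hdeg.trans h) rfl
      simpa using add_mem hstep this

theorem ker_cliqueParam {A B : Set V} (hBA : B ⊆ A) (c : V → ℕ) :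
    RingHom.ker (cliqueParam A B c : MvPolynomial (V ⊕ V) K →ₐ[K] _) = cliqueIdeal K A B c := by
  classical
  apply le_antisymm
  · let good (e : V ⊕ ℕ ⊕ ℕ →₀ ℕ) (m : V ⊕ V →₀ ℕ) : Prop :=
      (∀ v ∈ deadVars A B, m v = 0) ∧ paramDegree c m = e
    let ψ : MvPolynomial (V ⊕ ℕ ⊕ ℕ) K →ₗ[K] MvPolynomial (V ⊕ V) K ⧸ cliqueIdeal K A B c :=
      (basisMonomials _ K).constr K fun e =>
        if h : ∃ m, good e m then Ideal.Quotient.mk _ (monomial h.choose 1) else 0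
    have hψ : ψ ∘ₗ (cliqueParam A B c).toLinearMap =
        (Ideal.Quotient.mkₐ K (cliqueIdeal K A B c)).toLinearMap := by
      refine (basisMonomials _ K).ext fun m => ?_
      simp only [coe_basisMonomials, LinearMap.comp_apply, AlgHom.toLinearMap_apply,
        Ideal.Quotient.mkₐ_eq_mk]
      by_cases hm : ∀ v ∈ deadVars A B, m v = 0
      · rw [cliqueParam_monomial_of_alive c hm]
        have hex : ∃ m', good (paramDegree c m) m' := ⟨m, hm, rfl⟩
        have : ψ (monomial (paramDegree c m) 1) =
            Ideal.Quotient.mk _ (monomial hex.choose 1) := by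
          have := (basisMonomials (V ⊕ ℕ ⊕ ℕ) K).constr_basis K (fun e =>
            if h : ∃ m, good e m then Ideal.Quotient.mk (cliqueIdeal K A B c)
              (monomial h.choose 1) else 0) (paramDegree c m)
          rw [coe_basisMonomials] at this
          exact this.trans (dif_pos hex)
        rw [this, Ideal.Quotient.eq]
        exact monomial_sub_monomial_mem_cliqueIdeal hBA c _ _ hex.choose_spec.1 hm
          hex.choose_spec.2
      · push Not at hm
        obtain ⟨v, hv, hmv⟩ := hm
        rw [cliqueParam_monomial_of_dead c hv hmv, map_zero, eq_comm,
          Ideal.Quotient.eq_zero_iff_mem]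
        have hX : X v ∈ cliqueIdeal K A B c := by
          rcases v with i | i
          · exact X_inl_mem_cliqueIdeal B c hv
          · exact X_inr_mem_cliqueIdeal A c hv
        exact Ideal.mem_of_dvd _ (X_dvd_monomial.2 (Or.inr hmv)) hX
    intro f hf
    have := LinearMap.congr_fun hψ f
    simp only [LinearMap.comp_apply, AlgHom.toLinearMap_apply, Ideal.Quotient.mkₐ_eq_mk] at this
    rw [← Ideal.Quotient.eq_zero_iff_mem, ← this, (RingHom.mem_ker).1 hf, map_zero]
  · refine cliqueIdeal_le_iff.2 ⟨fun i hi => ?_, fun i hi => ?_, fun i j hi hj hc => ?_⟩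
    · have : Sum.inl i ∈ deadVars A B := hi
      simp [RingHom.mem_ker, cliqueParam, this]
    · have : Sum.inr i ∈ deadVars A B := hi
      simp [RingHom.mem_ker, cliqueParam, this]
    · have h1 : Sum.inl i ∉ deadVars A B := hi
      have h2 : Sum.inl j ∉ deadVars A B := hj
      have h3 : Sum.inr i ∉ deadVars A B := fun h => hi (hBA h)
      have h4 : Sum.inr j ∉ deadVars A B := fun h => hj (hBA h)
      simp only [RingHom.mem_ker, cliqueParam, edgeMinor, map_sub, map_mul, aeval_X, h1, h2, h3,
        h4, if_false, monomial_mul, paramExponent, hc, one_mul]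
      rw [sub_eq_zero]
      congr 2
      abel

theorem cliqueIdeal_isPrime {A B : Set V} (hBA : B ⊆ A) (c : V → ℕ) :
    (cliqueIdeal K A B c).IsPrime := by
  rw [← ker_cliqueParam hBA c]
  exact RingHom.ker_isPrime _

theorem X_inl_mem_cliqueIdeal_iff {A B : Set V} (hBA : B ⊆ A) (c : V → ℕ) {i : V} :
    X (Sum.inl i) ∈ cliqueIdeal K A B c ↔ i ∈ A := by
  refine ⟨fun h => ?_, X_inl_mem_cliqueIdeal B c⟩
  by_contra hi
  have h1 : Sum.inl i ∉ deadVars A B := hi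
  rw [← ker_cliqueParam hBA c, RingHom.mem_ker] at h
  simp [cliqueParam, h1] at h

theorem X_inr_mem_cliqueIdeal_iff {A B : Set V} (hBA : B ⊆ A) (c : V → ℕ) {i : V} :
    X (Sum.inr i) ∈ cliqueIdeal K A B c ↔ i ∈ B := by
  refine ⟨fun h => ?_, X_inr_mem_cliqueIdeal A c⟩
  by_contra hi
  have h1 : Sum.inr i ∉ deadVars A B := hi
  rw [← ker_cliqueParam hBA c, RingHom.mem_ker] at h
  simp [cliqueParam, h1] at h

end CliqueIdeal

section Height

variable {K : Type*} [Field K] {V : Type*}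

theorem cliqueIdeal_mono {A A' B B' : Set V} {c : V → ℕ} (hA : A ⊆ A') (hB : B ⊆ B')
    (h : ∀ i j, i ∉ A → j ∉ A → i ∈ A' → c i = c j → i ∈ B' ∨ j ∈ A') :
    cliqueIdeal K A B c ≤ cliqueIdeal K A' B' c := by
  refine cliqueIdeal_le_iff.2 ⟨fun i hi => X_inl_mem_cliqueIdeal _ _ (hA hi),
    fun i hi => X_inr_mem_cliqueIdeal _ _ (hB hi), fun i j hi hj hc => ?_⟩
  by_cases hi' : i ∈ A'
  · rcases h i j hi hj hi' hc with h' | h'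
    · exact sub_mem (Ideal.mul_mem_right _ _ (X_inl_mem_cliqueIdeal _ _ hi'))
        (Ideal.mul_mem_left _ _ (X_inr_mem_cliqueIdeal _ _ h'))
    · exact sub_mem (Ideal.mul_mem_right _ _ (X_inl_mem_cliqueIdeal _ _ hi'))
        (Ideal.mul_mem_right _ _ (X_inl_mem_cliqueIdeal _ _ h'))
  · by_cases hj' : j ∈ A'
    · rcases h j i hj hi hj' hc.symm with h' | h'
      · exact sub_mem (Ideal.mul_mem_left _ _ (X_inr_mem_cliqueIdeal _ _ h'))
          (Ideal.mul_mem_right _ _ (X_inl_mem_cliqueIdeal _ _ hj'))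
      · exact absurd h' hi'
    · exact edgeMinor_mem_cliqueIdeal _ hi' hj' hc

open Classical in
/-- Evaluation at the point `x_i = 1`, `y_i = c i` for `i ∉ T` and `x_i = y_i = 0` for `i ∈ T`. -/
def cliqueEval (K : Type*) [Field K] (T : Set V) (c : V → ℕ) : MvPolynomial (V ⊕ V) K →ₐ[K] K :=
  aeval (Sum.elim (fun i => if i ∈ T then 0 else 1) (fun i => if i ∈ T then 0 else (c i : K)))

theorem cliqueEval_X_inl (T : Set V) [DecidablePred (· ∈ T)] (c : V → ℕ) (i : V) :
    cliqueEval K T c (X (Sum.inl i)) = if i ∈ T then 0 else 1 := by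
  simp [cliqueEval]

theorem cliqueEval_X_inr (T : Set V) [DecidablePred (· ∈ T)] (c : V → ℕ) (i : V) :
    cliqueEval K T c (X (Sum.inr i)) = if i ∈ T then 0 else (c i : K) := by
  simp [cliqueEval]

theorem cliqueEval_eq_zero {T : Set V} {c : V → ℕ} {f : MvPolynomial (V ⊕ V) K}
    (hf : f ∈ cliqueIdeal K T T c) : cliqueEval K T c f = 0 := by
  classical
  refine (cliqueIdeal_le_iff (I := RingHom.ker (cliqueEval K T c))).2 ⟨fun i hi => ?_,
    fun i hi => ?_, fun i j hi hj hc => ?_⟩ hf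
  · simp [RingHom.mem_ker, cliqueEval_X_inl, hi]
  · simp [RingHom.mem_ker, cliqueEval_X_inr, hi]
  · simp [RingHom.mem_ker, edgeMinor, cliqueEval_X_inl, cliqueEval_X_inr, hi, hj, hc]

theorem le_coheight_cliqueIdeal [Fintype V] (n : ℕ) {A B : Set V} (hBA : B ⊆ A) (c : V → ℕ)
    (hn : Bᶜ.ncard + (c '' Aᶜ).ncard = n) :
    (n : ℕ∞) ≤ Order.coheight
      (⟨cliqueIdeal K A B c, cliqueIdeal_isPrime hBA c⟩ : PrimeSpectrum _) := by
  classical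
  induction n generalizing A B with
  | zero => simp
  | succ n ih =>
    suffices h : ∃ (A' B' : Set V) (_ : B' ⊆ A'), B'ᶜ.ncard + (c '' A'ᶜ).ncard = n ∧
        cliqueIdeal K A B c < cliqueIdeal K A' B' c by
      obtain ⟨A', B', hB', hn', hlt⟩ := h
      have h1 := ih hB' hn'
      have h2 := Order.coheight_add_one_le (b :=
        (⟨cliqueIdeal K A B c, cliqueIdeal_isPrime hBA c⟩ : PrimeSpectrum _))
        (a := ⟨cliqueIdeal K A' B' c, cliqueIdeal_isPrime hB' c⟩) hlt
      push_cast
      exact le_trans (by gcongr) h2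
    by_cases hA : ∃ i, i ∉ A
    · obtain ⟨i, hi⟩ := hA
      have hiB : i ∉ B := fun h => hi (hBA h)
      by_cases hj : ∃ j, j ≠ i ∧ j ∉ A ∧ c j = c i
      · obtain ⟨j, hji, hj, hc⟩ := hj
        refine ⟨insert i A, insert i B, Set.insert_subset_insert hBA, ?_, ?_⟩
        · have h1 : (insert i B)ᶜ.ncard + 1 = Bᶜ.ncard := by
            rw [← Set.ncard_sdiff_singleton_add_one (a := i) (s := Bᶜ) hiB]
            congr 2
            ext k
            simp [and_comm]
          have h2 : c '' (insert i A)ᶜ = c '' Aᶜ := by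
            apply Set.Subset.antisymm
            · exact Set.image_mono (Set.compl_subset_compl.2 (Set.subset_insert _ _))
            · rintro _ ⟨k, hk, rfl⟩
              by_cases hki : k = i
              · exact ⟨j, by simp [hji, hj], by rw [hc, hki]⟩
              · exact ⟨k, by simpa [hki] using hk, rfl⟩
          rw [h2]; omega
        · refine lt_of_le_of_ne (cliqueIdeal_mono (Set.subset_insert _ _) (Set.subset_insert _ _)
            fun a b ha _ ha' _ => Or.inl ?_) fun h => ?_
          · rcases ha' with rfl | ha'
            · exact Set.mem_insert _ _
            · exact absurd ha' ha
          · have : X (Sum.inl i) ∈ cliqueIdeal K A B c := by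
              rw [h]; exact X_inl_mem_cliqueIdeal _ _ (Set.mem_insert _ _)
            exact hi ((X_inl_mem_cliqueIdeal_iff hBA c).1 this)
      · push Not at hj
        refine ⟨insert i A, B, hBA.trans (Set.subset_insert _ _), ?_, ?_⟩
        · have h2 : (c '' (insert i A)ᶜ).ncard + 1 = (c '' Aᶜ).ncard := by
            rw [← Set.ncard_sdiff_singleton_add_one (a := c i) (s := c '' Aᶜ) ⟨i, hi, rfl⟩]
            congr 2
            ext l
            constructor
            · rintro ⟨k, hk, rfl⟩
              simp only [Set.mem_compl_iff, Set.mem_insert_iff, not_or] at hk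
              exact ⟨⟨k, hk.2, rfl⟩, hj k hk.1 hk.2⟩
            · rintro ⟨⟨k, hk, rfl⟩, hki⟩
              exact ⟨k, by
                simp only [Set.mem_compl_iff, Set.mem_insert_iff, not_or]
                exact ⟨fun h => hki (by rw [h]; rfl), hk⟩, rfl⟩
          omega
        · refine lt_of_le_of_ne (cliqueIdeal_mono (Set.subset_insert _ _) subset_rfl
            fun a b ha hb ha' hc => Or.inr ?_) fun h => ?_
          · rcases ha' with rfl | ha'
            · by_cases hba : b = a
              · exact Or.inl hba
              · exact absurd hc.symm (hj b hba hb)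
            · exact absurd ha' ha
          · have : X (Sum.inl i) ∈ cliqueIdeal K A B c := by
              rw [h]; exact X_inl_mem_cliqueIdeal _ _ (Set.mem_insert _ _)
            exact hi ((X_inl_mem_cliqueIdeal_iff hBA c).1 this)
    · push Not at hA
      obtain rfl : A = Set.univ := Set.eq_univ_of_forall hA
      have hB : Bᶜ.Nonempty := by
        rw [← Set.ncard_pos]
        simp at hn
        omega
      obtain ⟨i, hi⟩ := hB
      refine ⟨Set.univ, insert i B, Set.subset_univ _, ?_, ?_⟩
      · have h1 : (insert i B)ᶜ.ncard + 1 = Bᶜ.ncard := by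
          rw [← Set.ncard_sdiff_singleton_add_one (a := i) (s := Bᶜ) hi]
          congr 2
          ext k
          simp [and_comm]
        omega
      · refine lt_of_le_of_ne (cliqueIdeal_mono subset_rfl (Set.subset_insert _ _)
            fun a b ha => absurd (Set.mem_univ a) ha) fun h => ?_
        have : X (Sum.inr i) ∈ cliqueIdeal K Set.univ B c := by
          rw [h]; exact X_inr_mem_cliqueIdeal _ _ (Set.mem_insert _ _)
        exact hi ((X_inr_mem_cliqueIdeal_iff hBA c).1 this)

theorem height_add_coheight_le {σ : Type*} [Finite σ] (P : PrimeSpectrum (MvPolynomial σ K)) :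
    Order.height P + Order.coheight P ≤ Nat.card σ := by
  have h1 : ringKrullDim (MvPolynomial σ K) = Nat.card σ := by
    rw [MvPolynomial.ringKrullDim_of_isNoetherianRing, ringKrullDim_eq_zero_of_field, zero_add]
  rw [ringKrullDim, Order.krullDim_eq_iSup_height_add_coheight_of_nonempty] at h1
  rw [← WithBot.coe_le_coe]
  refine le_trans ?_ h1.le
  exact WithBot.coe_le_coe.2 (le_iSup (fun a : PrimeSpectrum (MvPolynomial σ K) =>
    Order.height a + Order.coheight a) P)

variable [CharZero K]

theorem edgeMinor_notMem_cliqueIdeal {T : Set V} {c : V → ℕ} {i j : V} (hi : i ∉ T) (hj : j ∉ T)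
    (h : c i ≠ c j) : edgeMinor K i j ∉ cliqueIdeal K T T c := by
  classical
  intro hm
  have h1 := cliqueEval_eq_zero hm
  simp only [edgeMinor, map_sub, map_mul, cliqueEval_X_inl, cliqueEval_X_inr, hi, hj, if_false,
    one_mul, sub_eq_zero, Nat.cast_inj] at h1
  exact h h1.symm

variable [Fintype V]

theorem le_height_cliqueIdeal (n : ℕ) (T : Set V) (c : V → ℕ)
    (hn : 2 * T.ncard + Tᶜ.ncard = n + (c '' Tᶜ).ncard) :
    (n : ℕ∞) ≤ Order.height
      (⟨cliqueIdeal K T T c, cliqueIdeal_isPrime subset_rfl c⟩ : PrimeSpectrum _) := by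
  classical
  induction n using Nat.strong_induction_on generalizing T c with
  | _ n ih =>
    by_cases hinj : Set.InjOn c Tᶜ
    · rw [hinj.ncard_image] at hn
      rcases T.eq_empty_or_nonempty with rfl | ⟨a, ha⟩
      · simp only [Set.ncard_empty] at hn; simp [show n = 0 by omega]
      · let e : V → ℕ := fun v => Fintype.equivFin V v
        have he : ∀ i j, e i = e j → i = j := fun i j h =>
          (Fintype.equivFin V).injective (Fin.val_injective h)
        have hcard := Set.ncard_sdiff_singleton_add_one (a := a) (s := T) ha
        obtain ⟨m, rfl⟩ : ∃ m, n = m + 2 := ⟨n - 2, by omega⟩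
        have hT' : T \ {a} ⊆ T := Set.sdiff_subset
        have h1 := ih m (by omega) (T \ {a}) e (by
          rw [Set.ncard_image_of_injective _ (fun i j h => he i j h)]; omega)
        have hle1 : cliqueIdeal K (T \ {a}) (T \ {a}) e < cliqueIdeal K T (T \ {a}) e := by
          refine lt_of_le_of_ne (cliqueIdeal_mono hT' subset_rfl fun i j _ _ hi hc =>
            Or.inr (he i j hc ▸ hi)) fun h => ?_
          have : X (Sum.inl a) ∈ cliqueIdeal K (T \ {a}) (T \ {a}) e := by
            rw [h]; exact X_inl_mem_cliqueIdeal _ _ ha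
          simpa using (X_inl_mem_cliqueIdeal_iff subset_rfl e).1 this
        have hle2 : cliqueIdeal K T (T \ {a}) e < cliqueIdeal K T T c := by
          refine lt_of_le_of_ne ?_ fun h => ?_
          · refine cliqueIdeal_le_iff.2 ⟨fun i hi => X_inl_mem_cliqueIdeal _ _ hi,
              fun i hi => X_inr_mem_cliqueIdeal _ _ (hT' hi), fun i j hi hj hc => ?_⟩
            obtain rfl := he i j hc
            simp [edgeMinor]
          · have : X (Sum.inr a) ∈ cliqueIdeal K T (T \ {a}) e := by
              rw [h]; exact X_inr_mem_cliqueIdeal _ _ ha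
            simpa using (X_inr_mem_cliqueIdeal_iff hT' e).1 this
        have h2 := Order.height_add_one_le (a := (⟨cliqueIdeal K (T \ {a}) (T \ {a}) e,
          cliqueIdeal_isPrime subset_rfl e⟩ : PrimeSpectrum _))
          (b := ⟨cliqueIdeal K T (T \ {a}) e, cliqueIdeal_isPrime hT' e⟩) hle1
        have h3 := Order.height_add_one_le (a := (⟨cliqueIdeal K T (T \ {a}) e,
          cliqueIdeal_isPrime hT' e⟩ : PrimeSpectrum _))
          (b := ⟨cliqueIdeal K T T c, cliqueIdeal_isPrime subset_rfl c⟩) hle2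
        calc ((m + 2 : ℕ) : ℕ∞) = (m : ℕ∞) + 1 + 1 := by push_cast; rw [add_assoc]; rfl
          _ ≤ _ := by gcongr; exact (by gcongr : (m : ℕ∞) + 1 ≤ _).trans h2
          _ ≤ _ := h3
    · simp only [Set.InjOn, not_forall] at hinj
      obtain ⟨i, hi, j, hj, hc, hij⟩ := hinj
      obtain ⟨N, hN⟩ : ∃ N, ∀ v, c v < N := ⟨∑ v, c v + 1, fun v =>
        Nat.lt_succ_of_le (Finset.single_le_sum (f := c) (by simp) (Finset.mem_univ v))⟩
      have himg : (Function.update c i N '' Tᶜ).ncard = (c '' Tᶜ).ncard + 1 := by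
        have : Function.update c i N '' Tᶜ = insert N (c '' Tᶜ) := by
          ext l
          constructor
          · rintro ⟨k, hk, rfl⟩
            by_cases hki : k = i
            · subst hki; simp
            · exact Or.inr ⟨k, hk, by simp [hki]⟩
          · rintro (rfl | ⟨k, hk, rfl⟩)
            · exact ⟨i, hi, by simp⟩
            · by_cases hki : k = i
              · exact ⟨j, hj, by rw [Function.update_of_ne (Ne.symm hij), hki, hc]⟩
              · exact ⟨k, hk, by simp [hki]⟩
        rw [this, Set.ncard_insert_of_notMem]
        rintro ⟨k, -, hk⟩
        exact absurd hk (hN k).ne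
      rcases n with _ | n
      · simp
      · have h1 := ih n (by omega) T (Function.update c i N) (by omega)
        have hlt : cliqueIdeal K T T (Function.update c i N) < cliqueIdeal K T T c := by
          refine lt_of_le_of_ne ?_ fun h => ?_
          · refine cliqueIdeal_le_iff.2 ⟨fun i hi => X_inl_mem_cliqueIdeal _ _ hi,
              fun i hi => X_inr_mem_cliqueIdeal _ _ hi, fun a b ha hb hab => ?_⟩
            by_cases hai : a = i <;> by_cases hbi : b = i
            · rw [hai, hbi]; simp [edgeMinor]
            · subst hai
              rw [Function.update_self, Function.update_of_ne hbi] at hab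
              exact absurd hab (hN b).ne'
            · subst hbi
              rw [Function.update_self, Function.update_of_ne hai] at hab
              exact absurd hab (hN a).ne
            · rw [Function.update_of_ne hbi, Function.update_of_ne hai] at hab
              exact edgeMinor_mem_cliqueIdeal _ ha hb hab
          · have h2 : edgeMinor K i j ∉ cliqueIdeal K T T (Function.update c i N) := by
              apply edgeMinor_notMem_cliqueIdeal hi hj
              rw [Function.update_self, Function.update_of_ne (Ne.symm hij)]
              exact (hN j).ne'
            exact h2 (h ▸ edgeMinor_mem_cliqueIdeal _ hi hj hc)
        have h2 := Order.height_add_one_le (a := (⟨cliqueIdeal K T T (Function.update c i N),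
          cliqueIdeal_isPrime subset_rfl _⟩ : PrimeSpectrum _))
          (b := ⟨cliqueIdeal K T T c, cliqueIdeal_isPrime subset_rfl c⟩) hlt
        push_cast
        exact le_trans (by gcongr) h2

end Height

section Masks

/-- The edges of `nineVertexExample`. -/
def nineEdges : List (Fin 9 × Fin 9) :=
  [(0, 1), (1, 2), (1, 4), (2, 3), (3, 4), (2, 5), (4, 6), (5, 6), (5, 7), (6, 8)]

theorem nineVertexExample_adj {i j : Fin 9} :
    nineVertexExample.Adj i j ↔ (i, j) ∈ nineEdges ∨ (j, i) ∈ nineEdges := by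
  have h : ∀ i j : Fin 9, (i ≠ j ∧ ((i, j) ∈ nineEdges ∨ (j, i) ∈ nineEdges)) ↔
      ((i, j) ∈ nineEdges ∨ (j, i) ∈ nineEdges) := by decide
  rw [← h i j, nineVertexExample, SimpleGraph.fromRel_adj]
  rfl

/-- The set of vertices encoded by the binary digits of a natural number. -/
def maskSet (k : ℕ) : Set (Fin 9) := {i | k.testBit i = true}

theorem mem_maskSet {k : ℕ} {i : Fin 9} : i ∈ maskSet k ↔ k.testBit i = true := Iff.rfl

theorem exists_maskSet_eq (T : Set (Fin 9)) : ∃ k < 512, maskSet k = T := by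
  classical
  refine ⟨Nat.ofBits fun i : Fin 9 => decide (i ∈ T), Nat.ofBits_lt_two_pow _, ?_⟩
  ext i
  rw [mem_maskSet, Nat.testBit_ofBits_lt _ _ i.2]
  simp

/-- The vertices of `nineVertexExample`, as natural numbers. -/
def nineVertices : List ℕ := [0, 1, 2, 3, 4, 5, 6, 7, 8]

theorem mem_nineVertices (i : Fin 9) : (i : ℕ) ∈ nineVertices := by
  revert i; decide

theorem exists_fin_of_mem_nineVertices {a : ℕ} (ha : a ∈ nineVertices) :
    ∃ i : Fin 9, (i : ℕ) = a :=
  ⟨⟨a, (by decide : ∀ a ∈ nineVertices, a < 9) a ha⟩, rfl⟩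

/-- The edges of `nineVertexExample`, as pairs of natural numbers. -/
def nineEdgesNat : List (ℕ × ℕ) :=
  [(0, 1), (1, 2), (1, 4), (2, 3), (3, 4), (2, 5), (4, 6), (5, 6), (5, 7), (6, 8)]

theorem nineEdgesNat_eq : nineEdgesNat = nineEdges.map fun e => ((e.1 : ℕ), (e.2 : ℕ)) := rfl

/-- Replace the entry `b` by `a` in a list. -/
def relabel (a b : ℕ) (l : List ℕ) : List ℕ := l.map fun t => bif Nat.beq t b then a else t

/-- Merge the labels of the two ends of an edge which avoids the vertices in the mask `k`. -/
def mergeStep (k : ℕ) (l : List ℕ) (e : ℕ × ℕ) : List ℕ :=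
  bif k.testBit e.1 || k.testBit e.2 then l else relabel (l.getD e.1 0) (l.getD e.2 0) l

/-- The labels of the connected components obtained by removing the vertices in the mask `k`. -/
def compLabels (k : ℕ) : List ℕ := nineEdgesNat.foldl (mergeStep k) nineVertices

/-- The label of the connected component of a vertex. -/
def compLabel (k : ℕ) (i : Fin 9) : ℕ := (compLabels k).getD i 0

theorem length_mergeStep (k : ℕ) (l : List ℕ) (e : ℕ × ℕ) :
    (mergeStep k l e).length = l.length := by
  unfold mergeStep relabel
  cases k.testBit e.1 || k.testBit e.2 <;> simp

theorem getD_mergeStep {k : ℕ} {l : List ℕ} (hl : l.length = 9) (e : ℕ × ℕ)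
    {i : ℕ} (hi : i < 9) : (mergeStep k l e).getD i 0 =
      if k.testBit e.1 || k.testBit e.2 then l.getD i 0
      else if l.getD i 0 = l.getD e.2 0 then l.getD e.1 0 else l.getD i 0 := by
  have hi : i < l.length := by rw [hl]; exact hi
  unfold mergeStep relabel
  cases k.testBit e.1 || k.testBit e.2
  · simp [List.getD_eq_getElem?_getD, hi, Bool.cond_eq_ite, Nat.beq_eq]
  · rfl

theorem getD_foldl_mergeStep_congr {k : ℕ} (es : List (ℕ × ℕ)) {l : List ℕ}
    (hl : l.length = 9) {i j : ℕ} (hi : i < 9) (hj : j < 9) (h : l.getD i 0 = l.getD j 0) :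
    (es.foldl (mergeStep k) l).getD i 0 = (es.foldl (mergeStep k) l).getD j 0 := by
  induction es generalizing l with
  | nil => exact h
  | cons e es ih =>
    refine ih ((length_mergeStep k l e).trans hl) ?_
    rw [getD_mergeStep hl e hi, getD_mergeStep hl e hj, h]

theorem getD_foldl_mergeStep_of_mem {k : ℕ} (es : List (ℕ × ℕ)) {l : List ℕ}
    (hl : l.length = 9) {e : ℕ × ℕ} (he : e ∈ es) (hi : e.1 < 9) (hj : e.2 < 9)
    (h1 : k.testBit e.1 = false) (h2 : k.testBit e.2 = false) :
    (es.foldl (mergeStep k) l).getD e.1 0 = (es.foldl (mergeStep k) l).getD e.2 0 := by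
  induction es generalizing l with
  | nil => simp at he
  | cons a es ih =>
    have hl' := (length_mergeStep k l a).trans hl
    rcases List.mem_cons.1 he with rfl | he
    · refine getD_foldl_mergeStep_congr es hl' hi hj ?_
      rw [getD_mergeStep hl _ hi, getD_mergeStep hl _ hj]
      simp [h1, h2]
    · exact ih hl' he

theorem rel_getD_foldl_mergeStep {k : ℕ} (r : Setoid ℕ) (es : List (ℕ × ℕ))
    (hr : ∀ e ∈ es, e.1 < 9 ∧ e.2 < 9 ∧ (k.testBit e.1 = false → k.testBit e.2 = false →
      r e.1 e.2))
    {l : List ℕ} (hl : l.length = 9) (h : ∀ i < 9, r i (l.getD i 0)) {i : ℕ} (hi : i < 9) :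
    r i ((es.foldl (mergeStep k) l).getD i 0) := by
  induction es generalizing l with
  | nil => exact h i hi
  | cons e es ih =>
    refine ih (fun e he => hr e (List.mem_cons_of_mem _ he)) ((length_mergeStep k l e).trans hl)
      fun j hj => ?_
    obtain ⟨he1, he2, he⟩ := hr e (by simp)
    rw [getD_mergeStep hl _ hj]
    split_ifs with h1 h2
    · exact h j hj
    · simp only [Bool.or_eq_true, not_or, Bool.not_eq_true] at h1
      refine r.trans (h j hj) ?_
      rw [h2]
      exact r.trans (r.symm (h _ he2)) (r.trans (r.symm (he h1.1 h1.2)) (h _ he1))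
    · exact h j hj

theorem getD_nineVertices {i : ℕ} (hi : i < 9) : nineVertices.getD i 0 = i :=
  (by decide : ∀ i < 9, nineVertices.getD i 0 = i) i hi

theorem rel_compLabel {k : ℕ} (r : Setoid ℕ)
    (hr : ∀ e ∈ nineEdges, e.1 ∉ maskSet k → e.2 ∉ maskSet k → r e.1 e.2) (i : Fin 9) :
    r i (compLabel k i) := by
  refine rel_getD_foldl_mergeStep r _ (fun e he => ?_) rfl (fun i hi => ?_) i.2
  · rw [nineEdgesNat_eq] at he
    obtain ⟨e, he', rfl⟩ := List.mem_map.1 he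
    refine ⟨e.1.2, e.2.2, fun h1 h2 => hr e he' ?_ ?_⟩ <;> simpa [mem_maskSet]
  · rw [getD_nineVertices hi]

theorem compLabel_eq_of_adj {k : ℕ} {i j : Fin 9} (h : nineVertexExample.Adj i j)
    (hi : i ∉ maskSet k) (hj : j ∉ maskSet k) : compLabel k i = compLabel k j := by
  rw [mem_maskSet, Bool.not_eq_true] at hi hj
  rcases nineVertexExample_adj.1 h with h | h
  · exact getD_foldl_mergeStep_of_mem _ rfl (e := (i, j))
      (nineEdgesNat_eq ▸
        List.mem_map_of_mem (f := fun e : Fin 9 × Fin 9 => ((e.1 : ℕ), (e.2 : ℕ))) h)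
      i.2 j.2 hi hj
  · exact (getD_foldl_mergeStep_of_mem _ rfl (e := (j, i))
      (nineEdgesNat_eq ▸
        List.mem_map_of_mem (f := fun e : Fin 9 × Fin 9 => ((e.1 : ℕ), (e.2 : ℕ))) h)
      j.2 i.2 hj hi).symm

theorem compLabel_eq_iff {k : ℕ} {i j : Fin 9} (hi : i ∈ (maskSet k)ᶜ) (hj : j ∈ (maskSet k)ᶜ) :
    compLabel k i = compLabel k j ↔
      (nineVertexExample.induce (maskSet k)ᶜ).Reachable ⟨i, hi⟩ ⟨j, hj⟩ := by
  constructor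
  · intro h
    let r : Setoid ℕ :=
      { r := fun a b => a = b ∨ ∃ x y : ((maskSet k)ᶜ : Set (Fin 9)), (x.1 : ℕ) = a ∧
          (y.1 : ℕ) = b ∧ (nineVertexExample.induce (maskSet k)ᶜ).Reachable x y
        iseqv := by
          refine ⟨fun a => Or.inl rfl, ?_, ?_⟩
          · rintro a b (rfl | ⟨x, y, ha, hb, h⟩)
            · exact Or.inl rfl
            · exact Or.inr ⟨y, x, hb, ha, h.symm⟩
          · rintro a b c (rfl | ⟨x, y, ha, hb, h⟩) (rfl | ⟨y', z, hb', hc, h'⟩)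
            · exact Or.inl rfl
            · exact Or.inr ⟨_, _, hb', hc, h'⟩
            · exact Or.inr ⟨_, _, ha, hb, h⟩
            · obtain rfl : y = y' := Subtype.ext (Fin.ext (hb.trans hb'.symm))
              exact Or.inr ⟨_, _, ha, hc, h.trans h'⟩ }
    have hr : ∀ a : Fin 9, r a (compLabel k a) := rel_compLabel r fun e he h1 h2 => by
      refine Or.inr ⟨⟨e.1, h1⟩, ⟨e.2, h2⟩, rfl, rfl, SimpleGraph.Adj.reachable ?_⟩
      exact nineVertexExample_adj.2 (Or.inl he)
    have hij : r i j := r.trans (hr i) (h ▸ r.symm (hr j))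
    rcases hij with hij | ⟨x, y, hx, hy, h⟩
    · obtain rfl := Fin.ext hij
      rfl
    · obtain rfl : x = ⟨i, hi⟩ := Subtype.ext (Fin.ext hx)
      obtain rfl : y = ⟨j, hj⟩ := Subtype.ext (Fin.ext hy)
      exact h
  · rintro ⟨p⟩
    have key : ∀ (a b : ((maskSet k)ᶜ : Set (Fin 9)))
        (_ : (nineVertexExample.induce (maskSet k)ᶜ).Walk a b),
        compLabel k a = compLabel k b := by
      intro a b p
      induction p with
      | nil => rfl
      | @cons a b c h _ ih => exact (compLabel_eq_of_adj h a.2 b.2).trans ih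
    exact key _ _ p

theorem getD_foldl_mergeStep_idem {k : ℕ} (es : List (ℕ × ℕ)) (hes : ∀ e ∈ es, e.1 < 9)
    {l : List ℕ} (hl : l.length = 9)
    (h : ∀ i < 9, l.getD i 0 < 9 ∧ l.getD (l.getD i 0) 0 = l.getD i 0) {i : ℕ} (hi : i < 9) :
    (es.foldl (mergeStep k) l).getD i 0 < 9 ∧ (es.foldl (mergeStep k) l).getD
      ((es.foldl (mergeStep k) l).getD i 0) 0 = (es.foldl (mergeStep k) l).getD i 0 := by
  induction es generalizing l with
  | nil => exact h i hi
  | cons e es ih =>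
    refine ih (fun e he => hes e (List.mem_cons_of_mem _ he)) ((length_mergeStep k l e).trans hl)
      fun j hj => ?_
    have he := h _ (hes e (by simp))
    have hj' := h j hj
    have hlt : (mergeStep k l e).getD j 0 < 9 := by
      rw [getD_mergeStep hl _ hj]
      split_ifs <;> omega
    refine ⟨hlt, ?_⟩
    rw [getD_mergeStep hl _ hlt, getD_mergeStep hl _ hj]
    split_ifs <;> simp_all

theorem compLabel_idem (k : ℕ) (i : Fin 9) :
    ∃ a : Fin 9, compLabel k i = a ∧ compLabel k a = a := by
  have h := getD_foldl_mergeStep_idem (k := k) nineEdgesNat (by decide) rfl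
    (by decide : ∀ i < 9, nineVertices.getD i 0 < 9 ∧
      nineVertices.getD (nineVertices.getD i 0) 0 = nineVertices.getD i 0) i.2
  exact ⟨⟨_, h.1⟩, rfl, h.2⟩

/-- The number of connected components left after removing the vertices in the mask `k`. -/
def compCount (k : ℕ) : ℕ :=
  nineVertices.countP fun a => !k.testBit a && Nat.beq ((compLabels k).getD a 0) a

theorem ncard_image_compLabel (k : ℕ) : (compLabel k '' (maskSet k)ᶜ).ncard = compCount k := by
  have h : compLabel k '' (maskSet k)ᶜ = ((nineVertices.filter fun a =>
      !k.testBit a && Nat.beq ((compLabels k).getD a 0) a).toFinset : Set ℕ) := by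
    ext a
    simp only [Set.mem_image, Set.mem_compl_iff, mem_maskSet, List.coe_toFinset, List.mem_filter,
      Bool.and_eq_true, Nat.beq_eq, Set.mem_ofPred, Bool.not_eq_true', Bool.not_eq_true]
    constructor
    · rintro ⟨i, hi, rfl⟩
      obtain ⟨a, ha, ha'⟩ := compLabel_idem k i
      rw [ha]
      refine ⟨mem_nineVertices a, ?_, ha'⟩
      let r : Setoid ℕ :=
        { r := fun a b => k.testBit a = k.testBit b
          iseqv := ⟨fun _ => rfl, Eq.symm, Eq.trans⟩ }
      have hr : k.testBit i = k.testBit (compLabel k i) :=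
        rel_compLabel r (fun e _ h1 h2 => (Bool.eq_false_of_not_eq_true h1).trans
          (Bool.eq_false_of_not_eq_true h2).symm) i
      rw [← ha, ← hr, hi]
    · rintro ⟨hb, h1, h2⟩
      obtain ⟨i, rfl⟩ := exists_fin_of_mem_nineVertices hb
      exact ⟨i, h1, h2⟩
  rw [h, Set.ncard_coe_finset, List.toFinset_card_of_nodup
    ((by decide : nineVertices.Nodup).filter _), compCount, List.countP_eq_length_filter]

theorem cNum_compl_maskSet (k : ℕ) : cNum nineVertexExample (maskSet k)ᶜ = compCount k := by
  rw [← ncard_image_compLabel, cNum]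
  let f : (nineVertexExample.induce (maskSet k)ᶜ).ConnectedComponent → ℕ :=
    SimpleGraph.ConnectedComponent.lift (fun a => compLabel k a.1)
      fun a b p _ => (compLabel_eq_iff a.2 b.2).2 ⟨p⟩
  have hf : Function.Injective f := by
    intro x y
    induction x using SimpleGraph.ConnectedComponent.ind with | _ a
    induction y using SimpleGraph.ConnectedComponent.ind with | _ b
    intro h
    exact SimpleGraph.ConnectedComponent.sound ((compLabel_eq_iff a.2 b.2).1 h)
  rw [Nat.card_congr (Equiv.ofInjective f hf), Nat.card_coe_set_eq]
  congr 1
  ext l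
  constructor
  · rintro ⟨x, rfl⟩
    induction x using SimpleGraph.ConnectedComponent.ind with | _ a
    exact ⟨a.1, a.2, rfl⟩
  · rintro ⟨a, ha, rfl⟩
    exact ⟨(nineVertexExample.induce (maskSet k)ᶜ).connectedComponentMk ⟨a, ha⟩, rfl⟩

/-- Function application which evaluates its argument first. -/
def forceNat {α : Type*} (f : ℕ → α) : ℕ → α
  | 0 => f 0
  | n + 1 => f (n + 1)

theorem forceNat_eq {α : Type*} (f : ℕ → α) (n : ℕ) : forceNat f n = f n := by
  cases n <;> rfl

/-- Decides whether the set encoded by a mask has the cutpoint property. -/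
def isCutMask (k : ℕ) : Bool :=
  nineVertices.all fun i => !k.testBit i ||
    Nat.blt (forceNat compCount (k ^^^ 2 ^ i)) (forceNat compCount k)

theorem hasCutpointProperty_maskSet (k : ℕ) :
    HasCutpointProperty nineVertexExample (maskSet k) ↔ isCutMask k = true := by
  have hiff : isCutMask k = true ↔
      ∀ i : Fin 9, k.testBit i = true → compCount (k ^^^ 2 ^ (i : ℕ)) < compCount k := by
    simp only [isCutMask, forceNat_eq, List.all_eq_true, Bool.or_eq_true, Bool.not_eq_true',
      Nat.blt_eq]
    constructor
    · intro h i hi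
      simpa [hi] using h i (mem_nineVertices i)
    · intro h a ha
      obtain ⟨i, rfl⟩ := exists_fin_of_mem_nineVertices ha
      cases hi : k.testBit i
      · exact Or.inl rfl
      · exact Or.inr (h i hi)
  rw [hiff]
  refine forall_congr' fun i => imp_congr_right fun hi => ?_
  have : (maskSet k)ᶜ ∪ {i} = (maskSet (k ^^^ 2 ^ (i : ℕ)))ᶜ := by
    ext j
    have hij : j = i ↔ (i : ℕ) = j := by rw [Fin.ext_iff, eq_comm]
    simp only [Set.mem_union, Set.mem_compl_iff, mem_maskSet, Set.mem_singleton_iff,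
      Nat.testBit_xor, Nat.testBit_two_pow]
    by_cases h : j = i
    · subst h; simpa using mem_maskSet.1 hi
    · simp [h, hij.not.1 h]
  rw [this, cNum_compl_maskSet, cNum_compl_maskSet]

/-- The masks of the sets with the cutpoint property. -/
def cutMasks : List ℕ :=
  [0, 2, 32, 64, 34, 66, 20, 68, 48, 96, 70, 42, 74, 50, 98, 52, 84, 106]

/-- Decides whether every component left by `k` lies inside a component left by `m`, and `m` is
contained in `k`. -/
def dominates (m k : ℕ) : Bool :=
  Nat.beq (m &&& k) m && nineVertices.all fun i => k.testBit i || nineVertices.all fun j =>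
    k.testBit j || Nat.beq ((compLabels k).getD i 0) ((compLabels k).getD j 0) ||
      !Nat.beq ((compLabels m).getD i 0) ((compLabels m).getD j 0)

theorem cutMasks_check :
    (List.range 512).all (fun k => isCutMask k == cutMasks.contains k) = true := by
  decide +kernel

theorem dominates_check :
    (List.range 512).all (fun k => cutMasks.any fun m => dominates m k) = true := by
  decide +kernel

theorem isCutMask_iff {k : ℕ} (hk : k < 512) : isCutMask k = true ↔ k ∈ cutMasks := by
  have h := List.all_eq_true.1 cutMasks_check k (List.mem_range.2 hk)
  rw [beq_iff_eq] at h
  rw [h, List.contains_iff_mem]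

theorem exists_dominates {k : ℕ} (hk : k < 512) : ∃ m ∈ cutMasks, maskSet m ⊆ maskSet k ∧
    ∀ i j, i ∉ maskSet k → j ∉ maskSet k → compLabel m i = compLabel m j →
      compLabel k i = compLabel k j := by
  obtain ⟨m, hm, h⟩ := List.any_eq_true.1
    (List.all_eq_true.1 dominates_check k (List.mem_range.2 hk))
  simp only [dominates, Bool.and_eq_true, Nat.beq_eq] at h
  refine ⟨m, hm, fun i hi => ?_, fun i j hi hj hc => ?_⟩
  · rw [mem_maskSet, ← h.1, Nat.testBit_and, Bool.and_eq_true] at hi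
    exact hi.2
  · have h2 := List.all_eq_true.1 h.2 i (mem_nineVertices i)
    rw [mem_maskSet, Bool.not_eq_true] at hi hj
    rw [hi, Bool.false_or] at h2
    have h3 := List.all_eq_true.1 h2 j (mem_nineVertices j)
    have hc' : Nat.beq ((compLabels m).getD i 0) ((compLabels m).getD j 0) = true :=
      Nat.beq_eq ▸ hc
    rw [hj, Bool.false_or, hc', Bool.not_true, Bool.or_false, Nat.beq_eq] at h3
    exact h3

theorem setOf_hasCutpointProperty :
    {T : Set (Fin 9) | HasCutpointProperty nineVertexExample T} =
      maskSet '' {k | k ∈ cutMasks} := by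
  ext T
  obtain ⟨k, hk, rfl⟩ := exists_maskSet_eq T
  rw [Set.mem_ofPred_eq, hasCutpointProperty_maskSet, isCutMask_iff hk]
  refine ⟨fun h => ⟨k, h, rfl⟩, ?_⟩
  rintro ⟨m, hm, h⟩
  have hm' : m < 512 := (by decide : ∀ m ∈ cutMasks, m < 512) m hm
  rw [← isCutMask_iff hk, ← hasCutpointProperty_maskSet, ← h, hasCutpointProperty_maskSet,
    isCutMask_iff hm']
  exact hm

end Masks

section MinimalPrimes

variable (K : Type*) [Field K]

/-- The prime ideal attached to a mask. -/
def maskPrime (k : ℕ) : Ideal (MvPolynomial (Fin 9 ⊕ Fin 9) K) :=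
  cliqueIdeal K (maskSet k) (maskSet k) (compLabel k)

instance maskPrime_isPrime (k : ℕ) : (maskPrime K k).IsPrime :=
  cliqueIdeal_isPrime subset_rfl _

/-- The point of the spectrum attached to a mask. -/
def maskPoint (k : ℕ) : PrimeSpectrum (MvPolynomial (Fin 9 ⊕ Fin 9) K) :=
  ⟨maskPrime K k, maskPrime_isPrime K k⟩

variable {K}

theorem edgeMinor_mem_of_inl_inr_left {V : Type*} {I : Ideal (MvPolynomial (V ⊕ V) K)} {i : V}
    (h1 : X (Sum.inl i) ∈ I) (h2 : X (Sum.inr i) ∈ I) (j : V) : edgeMinor K i j ∈ I :=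
  sub_mem (Ideal.mul_mem_right _ _ h1) (Ideal.mul_mem_left _ _ h2)

theorem edgeMinor_swap {V : Type*} (i j : V) : edgeMinor K i j = - edgeMinor K j i := by
  simp [edgeMinor]

theorem edgeMinor_mem_swap {V : Type*} {I : Ideal (MvPolynomial (V ⊕ V) K)} {i j : V} :
    edgeMinor K i j ∈ I ↔ edgeMinor K j i ∈ I := by
  rw [edgeMinor_swap, neg_mem_iff]

theorem edgeMinor_mem_trans {V : Type*} {I : Ideal (MvPolynomial (V ⊕ V) K)} (hI : I.IsPrime)
    {i j k : V} (hj : ¬ (X (Sum.inl j) ∈ I ∧ X (Sum.inr j) ∈ I)) (h1 : edgeMinor K i j ∈ I)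
    (h2 : edgeMinor K j k ∈ I) : edgeMinor K i k ∈ I := by
  have hx : X (Sum.inl j) * edgeMinor K i k ∈ I := by
    have : X (Sum.inl j) * edgeMinor K i k =
        X (Sum.inl i) * edgeMinor K j k + X (Sum.inl k) * edgeMinor K i j := by
      simp only [edgeMinor]; ring
    rw [this]
    exact add_mem (Ideal.mul_mem_left _ _ h2) (Ideal.mul_mem_left _ _ h1)
  have hy : X (Sum.inr j) * edgeMinor K i k ∈ I := by
    have : X (Sum.inr j) * edgeMinor K i k =
        X (Sum.inr i) * edgeMinor K j k + X (Sum.inr k) * edgeMinor K i j := by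
      simp only [edgeMinor]; ring
    rw [this]
    exact add_mem (Ideal.mul_mem_left _ _ h2) (Ideal.mul_mem_left _ _ h1)
  by_contra hik
  exact hj ⟨(hI.mem_or_mem hx).resolve_right hik, (hI.mem_or_mem hy).resolve_right hik⟩

theorem binomialEdgeIdeal_le_iff {V : Type*} {G : SimpleGraph V}
    {I : Ideal (MvPolynomial (V ⊕ V) K)} :
    binomialEdgeIdeal K G ≤ I ↔ ∀ i j, G.Adj i j → edgeMinor K i j ∈ I := by
  rw [binomialEdgeIdeal, Ideal.span_le]
  constructor
  · intro h i j hij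
    exact h ⟨i, j, hij, rfl⟩
  · rintro h _ ⟨i, j, hij, rfl⟩
    exact h i j hij

theorem binomialEdgeIdeal_le_maskPrime (k : ℕ) :
    binomialEdgeIdeal K nineVertexExample ≤ maskPrime K k := by
  refine binomialEdgeIdeal_le_iff.2 fun i j hij => ?_
  by_cases hi : i ∈ maskSet k
  · exact edgeMinor_mem_of_inl_inr_left (X_inl_mem_cliqueIdeal _ _ hi)
      (X_inr_mem_cliqueIdeal _ _ hi) _
  · by_cases hj : j ∈ maskSet k
    · exact edgeMinor_mem_swap.1 (edgeMinor_mem_of_inl_inr_left (X_inl_mem_cliqueIdeal _ _ hj)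
        (X_inr_mem_cliqueIdeal _ _ hj) _)
    · exact edgeMinor_mem_cliqueIdeal _ hi hj (compLabel_eq_of_adj hij hi hj)

theorem edgeMinor_mem_of_compLabel_eq {Q : Ideal (MvPolynomial (Fin 9 ⊕ Fin 9) K)}
    (hQ : Q.IsPrime) (hJ : binomialEdgeIdeal K nineVertexExample ≤ Q) {k : ℕ}
    (hk : ∀ i ∉ maskSet k, ¬ (X (Sum.inl i) ∈ Q ∧ X (Sum.inr i) ∈ Q)) {i j : Fin 9}
    (hi : i ∉ maskSet k) (hj : j ∉ maskSet k) (h : compLabel k i = compLabel k j) :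
    edgeMinor K i j ∈ Q := by
  have key : ∀ a b, (nineVertexExample.induce (maskSet k)ᶜ).Reachable a b →
      edgeMinor K a.1 b.1 ∈ Q := by
    rintro a b ⟨p⟩
    induction p with
    | nil => simp [edgeMinor]
    | @cons a b c h _ ih =>
      exact edgeMinor_mem_trans hQ (hk b.1 b.2) (binomialEdgeIdeal_le_iff.1 hJ a.1 b.1 h) ih
  exact key ⟨i, hi⟩ ⟨j, hj⟩ ((compLabel_eq_iff hi hj).1 h)

theorem exists_maskPrime_le {Q : Ideal (MvPolynomial (Fin 9 ⊕ Fin 9) K)} (hQ : Q.IsPrime)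
    (hJ : binomialEdgeIdeal K nineVertexExample ≤ Q) : ∃ m ∈ cutMasks, maskPrime K m ≤ Q := by
  obtain ⟨k, hk, hkQ⟩ := exists_maskSet_eq {i | X (Sum.inl i) ∈ Q ∧ X (Sum.inr i) ∈ Q}
  have hkQ' : ∀ i, i ∈ maskSet k ↔ X (Sum.inl i) ∈ Q ∧ X (Sum.inr i) ∈ Q := by
    intro i; rw [hkQ, Set.mem_ofPred]
  obtain ⟨m, hm, hmk, hc⟩ := exists_dominates hk
  refine ⟨m, hm, cliqueIdeal_le_iff.2 ⟨fun i hi => ((hkQ' i).1 (hmk hi)).1,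
    fun i hi => ((hkQ' i).1 (hmk hi)).2, fun i j _ _ hij => ?_⟩⟩
  by_cases hi : i ∈ maskSet k
  · exact edgeMinor_mem_of_inl_inr_left ((hkQ' i).1 hi).1 ((hkQ' i).1 hi).2 _
  by_cases hj : j ∈ maskSet k
  · exact edgeMinor_mem_swap.1
      (edgeMinor_mem_of_inl_inr_left ((hkQ' j).1 hj).1 ((hkQ' j).1 hj).2 _)
  exact edgeMinor_mem_of_compLabel_eq hQ hJ (fun a ha h => ha ((hkQ' a).2 h)) hi hj
    (hc i j hi hj hij)

theorem compCount_cutMasks {m : ℕ} (hm : m ∈ cutMasks) :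
    (compLabel m '' (maskSet m)ᶜ).ncard = (maskSet m).ncard + 1 := by
  have h : maskSet m = ((Finset.univ.filter fun i : Fin 9 => m.testBit i = true) :
      Set (Fin 9)) := by
    ext i; simp [mem_maskSet]
  have h1 : ∀ m ∈ cutMasks, compCount m =
      (Finset.univ.filter fun i : Fin 9 => m.testBit i = true).card + 1 := by
    decide +kernel
  rw [ncard_image_compLabel, h1 m hm, h, Set.ncard_coe_finset]

theorem ncard_add_ncard_compl_maskSet (m : ℕ) : (maskSet m).ncard + (maskSet m)ᶜ.ncard = 9 := by
  rw [Set.ncard_add_ncard_compl]; simp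

theorem ten_le_coheight_maskPoint {m : ℕ} (hm : m ∈ cutMasks) :
    10 ≤ Order.coheight (maskPoint K m) :=
  le_coheight_cliqueIdeal 10 subset_rfl _ (by
    rw [compCount_cutMasks hm]
    have := ncard_add_ncard_compl_maskSet m
    omega)

theorem htI_prime {R : Type*} [CommRing R] (P : PrimeSpectrum R) :
    htI P.asIdeal = Order.height P :=
  le_antisymm (iInf₂_le P le_rfl) (le_iInf₂ fun _ hQ => Order.height_mono hQ)

theorem enat_le_of_add_le {a b : ℕ∞} {m n : ℕ} (h : a + b ≤ (m + n : ℕ)) (hb : n ≤ b) :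
    a ≤ m := by
  cases a with
  | top => simp at h
  | coe a =>
    cases b with
    | top => simp at h
    | coe b =>
      norm_cast at *
      omega

variable [CharZero K]

theorem eight_le_height_maskPoint {m : ℕ} (hm : m ∈ cutMasks) :
    8 ≤ Order.height (maskPoint K m) :=
  le_height_cliqueIdeal 8 _ _ (by
    rw [compCount_cutMasks hm]
    have := ncard_add_ncard_compl_maskSet m
    omega)

theorem height_maskPoint {m : ℕ} (hm : m ∈ cutMasks) : Order.height (maskPoint K m) = 8 := by
  refine le_antisymm ?_ (eight_le_height_maskPoint hm)
  have h := height_add_coheight_le (maskPoint K m)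
  simp only [Nat.card_eq_fintype_card, Fintype.card_sum, Fintype.card_fin] at h
  exact enat_le_of_add_le (m := 8) (n := 10) h (ten_le_coheight_maskPoint hm)

theorem coheight_maskPoint {m : ℕ} (hm : m ∈ cutMasks) : Order.coheight (maskPoint K m) = 10 := by
  refine le_antisymm ?_ (ten_le_coheight_maskPoint hm)
  have h := height_add_coheight_le (maskPoint K m)
  simp only [Nat.card_eq_fintype_card, Fintype.card_sum, Fintype.card_fin] at h
  rw [add_comm] at h
  exact enat_le_of_add_le (m := 10) (n := 8) h (eight_le_height_maskPoint hm)

theorem htI_nineVertexExample : htI (binomialEdgeIdeal K nineVertexExample) = 8 := by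
  apply le_antisymm
  · rw [← height_maskPoint (K := K) (m := 0) (by decide)]
    exact iInf₂_le (maskPoint K 0) (binomialEdgeIdeal_le_maskPrime 0)
  · refine le_iInf₂ fun Q hQ => ?_
    obtain ⟨m, hm, hle⟩ := exists_maskPrime_le Q.2 hQ
    rw [← height_maskPoint (K := K) hm]
    exact Order.height_mono (show maskPoint K m ≤ Q from hle)

theorem isUnmixed_nineVertexExample : IsUnmixed (binomialEdgeIdeal K nineVertexExample) := by
  intro P hP
  obtain ⟨m, hm, hle⟩ := exists_maskPrime_le hP.1.1 hP.1.2
  have h : P = maskPrime K m :=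
    le_antisymm (hP.2 ⟨maskPrime_isPrime K m, binomialEdgeIdeal_le_maskPrime m⟩ hle) hle
  rw [h, htI_nineVertexExample, ← height_maskPoint (K := K) hm]
  exact htI_prime (maskPoint K m)

theorem ringKrullDim_nineVertexExample :
    ringKrullDim (MvPolynomial (Fin 9 ⊕ Fin 9) K ⧸ binomialEdgeIdeal K nineVertexExample) = 10 := by
  rw [ringKrullDim_quotient]
  apply le_antisymm
  · rw [Order.krullDim_eq_iSup_coheight]
    refine iSup_le fun Q => ?_
    obtain ⟨m, hm, hle⟩ := exists_maskPrime_le Q.1.2 Q.2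
    have h1 := Order.coheight_le_coheight_apply_of_strictMono
      (Subtype.val : PrimeSpectrum.zeroLocus (R := MvPolynomial (Fin 9 ⊕ Fin 9) K)
        (binomialEdgeIdeal K nineVertexExample) → _) (fun _ _ h => h) Q
    have h2 := Order.coheight_anti (show maskPoint K m ≤ Q.1 from hle)
    rw [coheight_maskPoint hm] at h2
    exact WithBot.coe_le_coe.2 (h1.trans h2)
  · have h := Order.coheight_eq_krullDim_Ici (maskPoint K 0)
    rw [coheight_maskPoint (by decide)] at h
    refine (show (10 : WithBot ℕ∞) = ((10 : ℕ∞) : WithBot ℕ∞) from rfl).trans h |>.le.trans ?_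
    exact Order.krullDim_le_of_strictMono
      (fun Q => ⟨Q.1, (binomialEdgeIdeal_le_maskPrime 0).trans Q.2⟩) (fun _ _ h => h)

end MinimalPrimes

section Generators

variable {K : Type*} [Field K]

/-- The exponent vector of `x_i y_j`. -/
def edgeExponent (e : Fin 9 × Fin 9) : Fin 9 ⊕ Fin 9 →₀ ℕ :=
  Finsupp.single (Sum.inl e.1) 1 + Finsupp.single (Sum.inr e.2) 1

/-- The edges of `nineVertexExample`, indexed by `Fin 10`. -/
def nthEdge : Fin 10 → Fin 9 × Fin 9 := nineEdges.get

/-- The initial coefficients along the edges. -/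
def edgeCoeffs : MvPolynomial (Fin 9 ⊕ Fin 9) K →ₗ[K] (Fin 10 → K) :=
  LinearMap.pi fun t => lcoeff K (edgeExponent (nthEdge t))

theorem binomialEdgeIdeal_nineVertexExample_eq : binomialEdgeIdeal K nineVertexExample =
    Ideal.span (Set.range fun t : Fin 10 =>
      edgeMinor K (nthEdge t).1 (nthEdge t).2) := by
  apply le_antisymm
  · refine binomialEdgeIdeal_le_iff.2 fun i j hij => ?_
    rcases nineVertexExample_adj.1 hij with h | h
    · obtain ⟨t, ht⟩ := List.get_of_mem h
      exact Ideal.subset_span ⟨t, by simp only [nthEdge, ht]⟩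
    · obtain ⟨t, ht⟩ := List.get_of_mem h
      exact edgeMinor_mem_swap.1 (Ideal.subset_span ⟨t, by simp only [nthEdge, ht]⟩)
  · rw [Ideal.span_le]
    rintro _ ⟨t, rfl⟩
    exact binomialEdgeIdeal_le_iff.1 le_rfl _ _
      (nineVertexExample_adj.2 (Or.inl (List.get_mem nineEdges t)))

theorem edgeExponent_le_iff {e e' : Fin 9 × Fin 9} : edgeExponent e ≤ edgeExponent e' ↔ e = e' := by
  refine ⟨fun h => ?_, fun h => h ▸ le_rfl⟩
  have h1 := h (Sum.inl e.1)
  have h2 := h (Sum.inr e.2)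
  simp only [edgeExponent, Finsupp.add_apply, Finsupp.single_apply] at h1 h2
  by_contra hne
  rcases e with ⟨a, b⟩
  rcases e' with ⟨a', b'⟩
  by_cases ha : a' = a
  · by_cases hb : b' = b
    · exact hne (by rw [ha, hb])
    · simp [hb] at h2
  · simp [ha] at h1

theorem coeff_edgeExponent_mul (p : MvPolynomial (Fin 9 ⊕ Fin 9) K) (e e' : Fin 9 × Fin 9) :
    coeff (edgeExponent e) (p * (X (Sum.inl e'.1) * X (Sum.inr e'.2))) =
      if e' = e then constantCoeff p else 0 := by
  have h : (X (Sum.inl e'.1) * X (Sum.inr e'.2) : MvPolynomial (Fin 9 ⊕ Fin 9) K) =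
      monomial (edgeExponent e') 1 := by
    rw [X, X, monomial_mul, one_mul]; rfl
  rw [h, coeff_mul_monomial']
  by_cases he : e' = e
  · subst he; simp [constantCoeff_eq]
  · rw [if_neg he, if_neg (mt edgeExponent_le_iff.1 he)]

theorem edgeCoeffs_mul_edgeMinor (p : MvPolynomial (Fin 9 ⊕ Fin 9) K) (t : Fin 10) :
    edgeCoeffs (p * edgeMinor K (nthEdge t).1 (nthEdge t).2) =
      Pi.single t (constantCoeff p) := by
  have h1 : ∀ t u : Fin 10, nthEdge t = nthEdge u ↔ t = u := by decide
  have h2 : ∀ t u : Fin 10, ¬ ((nthEdge t).2, (nthEdge t).1) = nthEdge u := by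
    decide
  funext u
  have h3 := coeff_edgeExponent_mul p (nthEdge u) (nthEdge t)
  have h4 := coeff_edgeExponent_mul p (nthEdge u)
    ((nthEdge t).2, (nthEdge t).1)
  rw [if_neg (h2 t u)] at h4
  rw [edgeCoeffs, LinearMap.pi_apply, lcoeff_apply, edgeMinor, mul_sub, coeff_sub, h3, h4, sub_zero,
    Pi.single_apply]
  by_cases h : t = u
  · rw [if_pos ((h1 t u).2 h), if_pos h.symm]
  · rw [if_neg (mt (h1 t u).1 h), if_neg (Ne.symm h)]

theorem edgeCoeffs_mul {g : MvPolynomial (Fin 9 ⊕ Fin 9) K}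
    (hg : g ∈ binomialEdgeIdeal K nineVertexExample) (h : MvPolynomial (Fin 9 ⊕ Fin 9) K) :
    edgeCoeffs (h * g) = constantCoeff h • edgeCoeffs g := by
  rw [binomialEdgeIdeal_nineVertexExample_eq] at hg
  induction hg using Submodule.span_induction generalizing h with
  | mem x hx =>
    obtain ⟨t, rfl⟩ := hx
    have h1 := edgeCoeffs_mul_edgeMinor (1 : MvPolynomial (Fin 9 ⊕ Fin 9) K) t
    rw [one_mul] at h1
    simp only [edgeCoeffs_mul_edgeMinor, h1]
    rw [← Pi.single_smul]
    simp
  | zero => simp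
  | add x y _ _ hx hy => rw [mul_add, map_add, hx, hy, map_add, smul_add]
  | smul a x _ hx => rw [smul_eq_mul, ← mul_assoc, hx, hx, map_mul, mul_smul]

theorem mu_nineVertexExample : mu (binomialEdgeIdeal K nineVertexExample) = 10 := by
  classical
  have hmem : (Finset.univ.image fun t : Fin 10 =>
      edgeMinor K (nthEdge t).1 (nthEdge t).2).card ∈
      {k | ∃ s : Finset (MvPolynomial (Fin 9 ⊕ Fin 9) K), s.card = k ∧
        Ideal.span (s : Set (MvPolynomial (Fin 9 ⊕ Fin 9) K)) =
          binomialEdgeIdeal K nineVertexExample} :=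
    ⟨_, rfl, by rw [binomialEdgeIdeal_nineVertexExample_eq]; simp⟩
  apply le_antisymm
  · exact (Nat.sInf_le hmem).trans (Finset.card_image_le.trans (by simp))
  · obtain ⟨s, hs, hspan⟩ := Nat.sInf_mem ⟨_, hmem⟩
    have key : ∀ g ∈ binomialEdgeIdeal K nineVertexExample,
        edgeCoeffs g ∈ Submodule.span K (s.image edgeCoeffs : Set (Fin 10 → K)) := by
      intro g hg
      rw [← hspan] at hg
      induction hg using Submodule.span_induction with
      | mem x hx => exact Submodule.subset_span (by simpa using ⟨x, hx, rfl⟩)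
      | zero => simp
      | add x y _ _ hx hy => rw [map_add]; exact add_mem hx hy
      | smul a x hx' hx =>
        rw [smul_eq_mul, edgeCoeffs_mul (hspan ▸ hx')]
        exact Submodule.smul_mem _ _ hx
    have htop : Submodule.span K (s.image edgeCoeffs : Set (Fin 10 → K)) = ⊤ := by
      rw [eq_top_iff, ← (Pi.basisFun K (Fin 10)).span_eq, Submodule.span_le]
      rintro _ ⟨t, rfl⟩
      have h1 := edgeCoeffs_mul_edgeMinor (1 : MvPolynomial (Fin 9 ⊕ Fin 9) K) t
      rw [one_mul, map_one] at h1
      rw [Pi.basisFun_apply, ← h1]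
      refine key _ ?_
      rw [binomialEdgeIdeal_nineVertexExample_eq]
      exact Ideal.subset_span ⟨t, rfl⟩
    have hfin := finrank_span_le_card (R := K) (s.image edgeCoeffs : Set (Fin 10 → K))
    rw [htop, finrank_top, Module.finrank_fin_fun] at hfin
    simp only [Finset.toFinset_coe] at hfin
    rw [mu, ← hs]
    exact hfin.trans Finset.card_image_le

end Generators

section ExtVanishing

open CategoryTheory Abelian

universe u

variable {R : Type u} [CommRing R]

/-- The groups `Ext^i(R/m, M)` vanish for all `i < k`; for finitely generated `M ≠ m M` over a
noetherian ring this says that the depth of `M` with respect to `m` is at least `k`. -/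
def DepthGE (m : Ideal R) (k : ℕ) (M : Type u) [AddCommGroup M] [Module R M] : Prop :=
  ∀ i < k, Subsingleton (Ext (ModuleCat.of R (R ⧸ m)) (ModuleCat.of R M) i)

namespace DepthGE

variable {m : Ideal R} {k l : ℕ} {M M₁ M₂ M₃ : Type u} [AddCommGroup M] [Module R M]
  [AddCommGroup M₁] [Module R M₁] [AddCommGroup M₂] [Module R M₂] [AddCommGroup M₃] [Module R M₃]

theorem mono (h : DepthGE m k M) (hl : l ≤ k) : DepthGE m l M :=
  fun i hi ↦ h i (hi.trans_le hl)

theorem of_zero : DepthGE m 0 M := fun _ hi ↦ absurd hi (Nat.not_lt_zero _)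

/-- The short exact sequence in the category of modules attached to an exact pair of maps. -/
theorem shortExact {f : M₁ →ₗ[R] M₂} {g : M₂ →ₗ[R] M₃} (hf : Function.Injective f)
    (hg : Function.Surjective g) (hfg : Function.Exact f g) :
    (ModuleCat.shortComplexOfCompEqZero f g hfg.linearMap_comp_eq_zero).ShortExact where
  exact := ModuleCat.shortComplex_exact _ hfg
  mono_f := (ModuleCat.mono_iff_injective _).mpr hf
  epi_g := (ModuleCat.epi_iff_surjective _).mpr hg

theorem left {f : M₁ →ₗ[R] M₂} {g : M₂ →ₗ[R] M₃} (hf : Function.Injective f)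
    (hg : Function.Surjective g) (hfg : Function.Exact f g) (h₂ : DepthGE m (k + 1) M₂)
    (h₃ : DepthGE m k M₃) : DepthGE m (k + 1) M₁ := by
  intro i hi
  have hS := shortExact hf hg hfg
  refine subsingleton_of_forall_eq 0 fun x ↦ ?_
  have := h₂ i hi
  cases i with
  | zero =>
    have := hS.mono_f
    exact Ext.postcomp_mk₀_injective_of_mono (ModuleCat.of R (R ⧸ m)) (ModuleCat.ofHom f)
      (Subsingleton.elim (α := Ext (ModuleCat.of R (R ⧸ m)) (ModuleCat.of R M₂) 0) _ _)
  | succ i =>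
    have := h₃ i (by omega)
    obtain ⟨y, rfl⟩ := Ext.covariant_sequence_exact₁ _ hS x
      (Subsingleton.elim (α := Ext (ModuleCat.of R (R ⧸ m)) (ModuleCat.of R M₂) (i + 1)) _ _) rfl
    rw [Subsingleton.elim (α := Ext (ModuleCat.of R (R ⧸ m)) (ModuleCat.of R M₃) i) y 0,
      Ext.zero_comp]

theorem middle {f : M₁ →ₗ[R] M₂} {g : M₂ →ₗ[R] M₃} (hf : Function.Injective f)
    (hg : Function.Surjective g) (hfg : Function.Exact f g) (h₁ : DepthGE m k M₁)
    (h₃ : DepthGE m k M₃) : DepthGE m k M₂ := by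
  intro i hi
  have hS := shortExact hf hg hfg
  refine subsingleton_of_forall_eq 0 fun x ↦ ?_
  have := h₁ i hi
  have := h₃ i hi
  obtain ⟨y, rfl⟩ := Ext.covariant_sequence_exact₂ _ hS x
    (Subsingleton.elim (α := Ext (ModuleCat.of R (R ⧸ m)) (ModuleCat.of R M₃) i) _ _)
  rw [Subsingleton.elim (α := Ext (ModuleCat.of R (R ⧸ m)) (ModuleCat.of R M₁) i) y 0,
    Ext.zero_comp]

theorem right {f : M₁ →ₗ[R] M₂} {g : M₂ →ₗ[R] M₃} (hf : Function.Injective f)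
    (hg : Function.Surjective g) (hfg : Function.Exact f g) (h₁ : DepthGE m (k + 1) M₁)
    (h₂ : DepthGE m k M₂) : DepthGE m k M₃ := by
  intro i hi
  have hS := shortExact hf hg hfg
  refine subsingleton_of_forall_eq 0 fun x ↦ ?_
  have := h₁ (i + 1) (by omega)
  have := h₂ i hi
  obtain ⟨y, rfl⟩ := Ext.covariant_sequence_exact₃ _ hS x rfl
    (Subsingleton.elim (α := Ext (ModuleCat.of R (R ⧸ m)) (ModuleCat.of R M₁) (i + 1)) _ _)
  rw [Subsingleton.elim (α := Ext (ModuleCat.of R (R ⧸ m)) (ModuleCat.of R M₂) i) y 0,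
    Ext.zero_comp]

theorem comp_smul_id_eq_zero {N L : ModuleCat.{u} R} {x : R} (hx : x ∈ Module.annihilator R N)
    {i : ℕ} (a : Ext N L i) : a.comp (Ext.mk₀ (x • 𝟙 L)) (add_zero i) = 0 := by
  have : x • 𝟙 N = 0 := by
    simp [← ModuleCat.lsmul_eq_smul_id, Module.mem_annihilator_iff_lsmul_eq_zero.mp hx]
  have smul_eq : x • a = (Ext.mk₀ (x • 𝟙 N)).comp a (zero_add i) := by simp [Ext.mk₀_smul]
  simp [Ext.mk₀_smul, this, smul_eq]

theorem of_injective_smul {x : R} (hx : x ∈ m) {f : M →ₗ[R] M} {g : M →ₗ[R] M₃}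
    (hfx : f = x • LinearMap.id) (hf : Function.Injective f) (hg : Function.Surjective g)
    (hfg : Function.Exact f g) (h₃ : DepthGE m k M₃) : DepthGE m (k + 1) M := by
  intro i hi
  have hS := shortExact hf hg hfg
  have hsmul : ModuleCat.ofHom f = x • 𝟙 (ModuleCat.of R M) := by
    ext1
    exact hfx
  refine subsingleton_of_forall_eq 0 fun a ↦ ?_
  have hann : x ∈ Module.annihilator R (ModuleCat.of R (R ⧸ m)) := by
    change x ∈ Module.annihilator R (R ⧸ m)
    rwa [Ideal.annihilator_quotient]
  have hzero : a.comp (Ext.mk₀ (ModuleCat.ofHom f)) (add_zero i) = 0 := by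
    rw [hsmul]
    exact comp_smul_id_eq_zero hann a
  cases i with
  | zero =>
    have := hS.mono_f
    refine Ext.postcomp_mk₀_injective_of_mono (ModuleCat.of R (R ⧸ m))
      (ModuleCat.ofHom f) ?_
    rw [map_zero]
    exact hzero
  | succ i =>
    have := h₃ i (by omega)
    obtain ⟨y, rfl⟩ := Ext.covariant_sequence_exact₁ _ hS a hzero rfl
    rw [Subsingleton.elim (α := Ext (ModuleCat.of R (R ⧸ m)) (ModuleCat.of R M₃) i) y 0,
      Ext.zero_comp]

theorem prod (h₁ : DepthGE m k M₁) (h₂ : DepthGE m k M₂) : DepthGE m k (M₁ × M₂) :=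
  middle LinearMap.inl_injective LinearMap.snd_surjective .inl_snd h₁ h₂

/-- Depth bound along a decomposition `I = A ⊓ B`. -/
theorem quotient_inf {A B : Ideal R} (hA : DepthGE m (k + 1) (R ⧸ A))
    (hB : DepthGE m (k + 1) (R ⧸ B)) (hAB : DepthGE m k (R ⧸ A ⊔ B)) :
    DepthGE m (k + 1) (R ⧸ A ⊓ B) := by
  let f : (R ⧸ A ⊓ B) →ₗ[R] (R ⧸ A) × (R ⧸ B) :=
    (Submodule.factor inf_le_left).prod (Submodule.factor inf_le_right)
  let g : (R ⧸ A) × (R ⧸ B) →ₗ[R] R ⧸ A ⊔ B :=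
    (Submodule.factor le_sup_left).coprod (-Submodule.factor le_sup_right)
  refine left (f := f) (g := g) ?_ ?_ ?_ (hA.prod hB) hAB
  · rw [← LinearMap.ker_eq_bot, LinearMap.ker_eq_bot']
    intro a ha
    obtain ⟨a, rfl⟩ := Ideal.Quotient.mk_surjective a
    have h := Prod.ext_iff.mp ha
    exact Ideal.Quotient.eq_zero_iff_mem.mpr
      ⟨Ideal.Quotient.eq_zero_iff_mem.mp h.1, Ideal.Quotient.eq_zero_iff_mem.mp h.2⟩
  · intro a
    obtain ⟨a, rfl⟩ := Ideal.Quotient.mk_surjective a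
    refine ⟨(Ideal.Quotient.mk A a, 0), ?_⟩
    simp only [g, LinearMap.coprod_apply, map_zero, add_zero]
    rfl
  · rintro ⟨a, b⟩
    obtain ⟨a, rfl⟩ := Ideal.Quotient.mk_surjective a
    obtain ⟨b, rfl⟩ := Ideal.Quotient.mk_surjective b
    have hg : g (Ideal.Quotient.mk A a, Ideal.Quotient.mk B b) =
        Ideal.Quotient.mk (A ⊔ B) (a - b) := by
      rw [sub_eq_add_neg]
      rfl
    rw [hg, Ideal.Quotient.eq_zero_iff_mem]
    constructor
    · intro h
      obtain ⟨p, hp, q, hq, hpq⟩ := Submodule.mem_sup.mp h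
      refine ⟨Ideal.Quotient.mk _ (a - p), Prod.ext ?_ ?_⟩
      · exact Ideal.Quotient.eq.mpr (by simpa using hp)
      · refine Ideal.Quotient.eq.mpr ?_
        change a - p - b ∈ B
        rwa [show a - p - b = q by linear_combination -hpq]
    · rintro ⟨c, hc⟩
      obtain ⟨c, rfl⟩ := Ideal.Quotient.mk_surjective c
      have h := Prod.ext_iff.mp hc
      have h1 : c - a ∈ A := Ideal.Quotient.eq.mp h.1
      have h2 : c - b ∈ B := Ideal.Quotient.eq.mp h.2
      rw [show a - b = (c - b) - (c - a) by ring]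
      exact sub_mem (Ideal.mem_sup_right h2) (Ideal.mem_sup_left h1)

theorem lsmul_exact_factor (I : Ideal R) (x : R) :
    Function.Exact (x • LinearMap.id : (R ⧸ I) →ₗ[R] R ⧸ I)
      (Submodule.factor (le_sup_left : I ≤ I ⊔ Ideal.span {x})) := by
  intro a
  obtain ⟨a, rfl⟩ := Ideal.Quotient.mk_surjective a
  change Ideal.Quotient.mk _ a = 0 ↔ _
  rw [Ideal.Quotient.eq_zero_iff_mem]
  constructor
  · intro h
    obtain ⟨p, hp, q, hq, hpq⟩ := Submodule.mem_sup.mp h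
    obtain ⟨c, rfl⟩ := Ideal.mem_span_singleton'.mp hq
    refine ⟨Ideal.Quotient.mk _ c, Ideal.Quotient.eq.mpr ?_⟩
    change x * c - a ∈ I
    rw [show x * c - a = -p by linear_combination hpq]
    exact neg_mem hp
  · rintro ⟨c, hc⟩
    obtain ⟨c, rfl⟩ := Ideal.Quotient.mk_surjective c
    have h1 : x * c - a ∈ I := Ideal.Quotient.eq.mp hc
    rw [show a = c * x - (x * c - a) by ring]
    exact sub_mem (Ideal.mem_sup_right (Ideal.mul_mem_left _ _ (Ideal.mem_span_singleton_self x)))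
      (Ideal.mem_sup_left h1)

theorem smul_id_injective {I : Ideal R} {x : R} (hx : ∀ a, x * a ∈ I → a ∈ I) :
    Function.Injective (x • LinearMap.id : (R ⧸ I) →ₗ[R] R ⧸ I) := by
  rw [← LinearMap.ker_eq_bot, LinearMap.ker_eq_bot']
  intro a ha
  obtain ⟨a, rfl⟩ := Ideal.Quotient.mk_surjective a
  exact Ideal.Quotient.eq_zero_iff_mem.mpr (hx a (Ideal.Quotient.eq_zero_iff_mem.mp ha))

theorem quotient_of_sup_span {I : Ideal R} {x : R} (hxm : x ∈ m) (hx : ∀ a, x * a ∈ I → a ∈ I)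
    (h : DepthGE m k (R ⧸ I ⊔ Ideal.span {x})) : DepthGE m (k + 1) (R ⧸ I) :=
  of_injective_smul hxm rfl (smul_id_injective hx) (Submodule.factor_surjective _)
    (lsmul_exact_factor I x) h

theorem quotient_sup_span {I : Ideal R} {x : R} (hx : ∀ a, x * a ∈ I → a ∈ I)
    (h : DepthGE m (k + 1) (R ⧸ I)) : DepthGE m k (R ⧸ I ⊔ Ideal.span {x}) :=
  right (smul_id_injective hx) (Submodule.factor_surjective _) (lsmul_exact_factor I x) h
    (h.mono k.le_succ)

theorem smul_top_quotient_lt_top {I : Ideal R} (hI : I ≤ m) (hm : m ≠ ⊤) :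
    m • (⊤ : Submodule R (R ⧸ I)) < ⊤ := by
  rw [lt_top_iff_ne_top]
  intro h
  apply hm
  have h1 : m • (⊤ : Submodule R (R ⧸ I)) ≤ Submodule.map I.mkQ m := by
    refine Submodule.smul_le.mpr fun r hr n _ ↦ ?_
    obtain ⟨n, rfl⟩ := Submodule.mkQ_surjective I n
    exact ⟨r * n, Ideal.mul_mem_right _ _ hr, rfl⟩
  rw [h, top_le_iff] at h1
  have h2 := congrArg (Submodule.comap I.mkQ) h1
  rwa [Submodule.comap_map_mkQ, Submodule.comap_top, sup_eq_right.mpr hI] at h2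

theorem exists_isRegular [IsNoetherianRing R] {I : Ideal R} (hI : I ≤ m) (hm : m ≠ ⊤)
    (h : DepthGE m k (R ⧸ I)) :
    ∃ rs : List R, rs.length = k ∧ (∀ r ∈ rs, r ∈ m) ∧
      RingTheory.Sequence.IsRegular (R ⧸ I) rs :=
  ModuleCat.exists_isRegular_of_exists_subsingleton_ext m k (ModuleCat.of R (R ⧸ I))
    (smul_top_quotient_lt_top hI hm) (ModuleCat.of R (R ⧸ m))
    (by
      change Module.support R (R ⧸ m) = _
      rw [Module.support_eq_zeroLocus, Ideal.annihilator_quotient]) h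

theorem of_isRegular [IsNoetherianRing R] {I : Ideal R} (hI : I ≤ m) (hm : m ≠ ⊤) {rs : List R}
    (hrs : ∀ r ∈ rs, r ∈ m) (h : RingTheory.Sequence.IsRegular (R ⧸ I) rs) :
    DepthGE m rs.length (R ⧸ I) :=
  ModuleCat.subsingleton_ext_of_exists_isRegular m (ModuleCat.of R (R ⧸ m))
    (by
      change Module.support R (R ⧸ m) ⊆ _
      rw [Module.support_eq_zeroLocus, Ideal.annihilator_quotient])
    (ModuleCat.of R (R ⧸ I)) (smul_top_quotient_lt_top hI hm) rs hrs h

end DepthGE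

end ExtVanishing

section RegularSequences

open RingTheory.Sequence

open scoped Pointwise

theorem isRegular_map_mk_iff {R : Type*} [CommRing R] {I : Ideal R} {rs : List R} :
    IsRegular (R ⧸ I) (rs.map (Ideal.Quotient.mk I)) ↔ IsRegular (R ⧸ I) rs := by
  rw [isRegular_iff, isRegular_iff]
  refine and_congr (isWeaklyRegular_map_algebraMap_iff (R ⧸ I) (R ⧸ I) rs) (not_congr ?_)
  have h : (Ideal.ofList (rs.map (Ideal.Quotient.mk I)) • ⊤ :
      Submodule (R ⧸ I) (R ⧸ I)).restrictScalars R = Ideal.ofList rs • ⊤ := by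
    rw [← Ideal.map_ofList, ← Ideal.Quotient.algebraMap_eq,
      Ideal.smul_restrictScalars, Submodule.restrictScalars_top]
  rw [← h, ← Submodule.restrictScalars_top R (R ⧸ I) (R ⧸ I), Submodule.restrictScalars_inj]

/-- An element of `M` killed by the prime `p` whose annihilator is contained in the prime `m`
bounds the length of `M`-regular sequences in `m` by the dimension of `p`. -/
theorem length_le_coheight_of_isWeaklyRegular {R : Type*} [CommRing R] [IsNoetherianRing R]
    {m : Ideal R} [m.IsPrime] {M : Type*} [AddCommGroup M] [Module R M] [Module.Finite R M]
    {rs : List R} (hrs : ∀ r ∈ rs, r ∈ m) (hreg : IsWeaklyRegular M rs) (p : PrimeSpectrum R)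
    {u : M} (hpu : ∀ a ∈ p.asIdeal, a • u = 0) (hum : ∀ a : R, a • u = 0 → a ∈ m) :
    (rs.length : ℕ∞) ≤ Order.coheight p := by
  induction rs generalizing M p with
  | nil => simp
  | cons x rs ih =>
    rw [isWeaklyRegular_cons_iff] at hreg
    obtain ⟨hx, hreg⟩ := hreg
    have hxm : x ∈ m := hrs x (by simp)
    let N : Submodule R M := Submodule.torsionBySet R M p.asIdeal
    have hu : u ∈ N := (Submodule.mem_torsionBySet_iff _ _).mpr fun a ↦ hpu a a.2
    have hsupp : (⟨m, inferInstance⟩ : PrimeSpectrum R) ∈ Module.support R (QuotSMulTop x N) := by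
      rw [Module.support_quotSMulTop]
      refine ⟨Module.mem_support_iff_exists_annihilator.mpr ⟨⟨u, hu⟩, fun a ha ↦ hum a ?_⟩, ?_⟩
      · rw [Submodule.mem_annihilator_span_singleton] at ha
        exact congrArg Subtype.val ha
      · simpa [PrimeSpectrum.mem_zeroLocus] using hxm
    obtain ⟨q, hq, hqm⟩ := Ideal.exists_minimalPrimes_le
      (Module.annihilator_le_of_mem_support hsupp)
    have hass := Module.associatedPrimes.minimalPrimes_annihilator_subset_associatedPrimes R _ hq
    obtain ⟨hqp, n, hn⟩ := isAssociatedPrime_iff.mp hass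
    obtain ⟨n, rfl⟩ := Submodule.mkQ_surjective _ n
    have hann : ∀ a, a ∈ q ↔ a • Submodule.Quotient.mk (p := x • (⊤ : Submodule R M)) n.1 = 0 := by
      intro a
      rw [hn, Submodule.mem_colon_singleton, Submodule.mem_bot, Submodule.mkQ_apply,
        ← Submodule.Quotient.mk_smul, ← Submodule.Quotient.mk_smul, Submodule.Quotient.mk_eq_zero,
        Submodule.Quotient.mk_eq_zero, Submodule.mem_smul_pointwise_iff_exists,
        Submodule.mem_smul_pointwise_iff_exists]
      constructor
      · rintro ⟨b, -, hb⟩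
        exact ⟨b, trivial, congrArg Subtype.val hb⟩
      · rintro ⟨b, -, hb⟩
        refine ⟨⟨b, (Submodule.mem_torsionBySet_iff _ _).mpr fun c ↦ hx ?_⟩, trivial,
          Subtype.ext hb⟩
        change x • (c : R) • b = x • (0 : M)
        rw [smul_comm, hb, smul_comm, (Submodule.mem_torsionBySet_iff _ _).mp n.2 c, smul_zero,
          smul_zero]
    have hlt : p < ⟨q, hqp⟩ := by
      refine lt_of_le_not_ge (fun a ha ↦ (hann a).mpr ?_) fun h ↦ ?_
      · rw [← Submodule.Quotient.mk_smul,
          (Submodule.mem_torsionBySet_iff _ _).mp n.2 ⟨a, ha⟩, Submodule.Quotient.mk_zero]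
      · have hxq : x ∈ q := (hann x).mpr (by
          rw [← Submodule.Quotient.mk_smul, Submodule.Quotient.mk_eq_zero]
          exact Submodule.smul_mem_pointwise_smul _ _ _ trivial)
        have hu0 : u = 0 := hx (by
          change x • u = x • (0 : M)
          rw [hpu x (h hxq), smul_zero])
        exact (Ideal.ne_top_iff_one m).mp Ideal.IsPrime.ne_top' (hum 1 (by rw [hu0, smul_zero]))
    have := ih (fun r hr ↦ hrs r (List.mem_cons_of_mem _ hr)) hreg ⟨q, hqp⟩
      (fun a ha ↦ (hann a).mp ha) (fun a ha ↦ hqm ((hann a).mpr ha))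
    calc ((x :: rs).length : ℕ∞) = rs.length + 1 := by simp
      _ ≤ Order.coheight (⟨q, hqp⟩ : PrimeSpectrum R) + 1 := by gcongr
      _ ≤ Order.coheight p := Order.coheight_add_one_le hlt

end RegularSequences

section Retraction

/-- Setting the variables in `D` to zero. -/
def killVars {σ : Type*} (K : Type*) [Field K] (D : Set σ) :
    MvPolynomial σ K →ₐ[K] MvPolynomial σ K :=
  open scoped Classical in aeval fun v ↦ if v ∈ D then 0 else X v

variable {K : Type*} [Field K] {σ : Type*}

theorem killVars_X_of_mem {D : Set σ} {v : σ} (hv : v ∈ D) : killVars K D (X v) = 0 := by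
  simp [killVars, hv]

theorem killVars_X_of_notMem {D : Set σ} {v : σ} (hv : v ∉ D) : killVars K D (X v) = X v := by
  simp [killVars, hv]

theorem sub_killVars_mem (D : Set σ) (s : MvPolynomial σ K) :
    s - killVars K D s ∈ Ideal.span (X '' D : Set (MvPolynomial σ K)) := by
  rw [← Ideal.Quotient.eq]
  have : (Ideal.Quotient.mkₐ K (Ideal.span (X '' D : Set (MvPolynomial σ K)))) =
      (Ideal.Quotient.mkₐ K _).comp (killVars K D) := by
    ext v
    by_cases hv : v ∈ D
    · rw [AlgHom.comp_apply, killVars_X_of_mem hv, map_zero]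
      exact Ideal.Quotient.eq_zero_iff_mem.mpr (Ideal.subset_span ⟨v, hv, rfl⟩)
    · rw [AlgHom.comp_apply, killVars_X_of_notMem hv]
  exact DFunLike.congr_fun this s

theorem span_inf_le_of_killVars {G : Set (MvPolynomial σ K)} {B J : Ideal (MvPolynomial σ K)}
    (D : Set σ) (hG : ∀ g ∈ G, g - killVars K D g ∈ J) (hGD : ∀ g ∈ G, ∀ v ∈ D, g * X v ∈ J)
    (hB : B ≤ J.comap (killVars K D)) : Ideal.span G ⊓ B ≤ J := by
  have key : ∀ a ∈ Ideal.span G, a - killVars K D a ∈ J := by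
    intro a ha
    induction ha using Submodule.span_induction with
    | mem g hg => exact hG g hg
    | zero => simp
    | add a b _ _ ha hb =>
      rw [map_add, show a + b - (killVars K D a + killVars K D b) =
        (a - killVars K D a) + (b - killVars K D b) by ring]
      exact add_mem ha hb
    | smul h a ha hb =>
      have hD : ∀ y ∈ Ideal.span (X '' D : Set (MvPolynomial σ K)), a * y ∈ J := by
        intro y hy
        have h1 : Ideal.span G * Ideal.span (X '' D : Set (MvPolynomial σ K)) ≤ J := by
          rw [Ideal.span_mul_span', Ideal.span_le]
          rintro _ ⟨g, hg, _, ⟨v, hv, rfl⟩, rfl⟩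
          exact hGD g hg v hv
        exact h1 (Ideal.mul_mem_mul ha hy)
      rw [smul_eq_mul, map_mul, show h * a - killVars K D h * killVars K D a =
        a * (h - killVars K D h) + killVars K D h * (a - killVars K D a) by ring]
      exact add_mem (hD _ (sub_killVars_mem D h)) (Ideal.mul_mem_left _ _ hb)
  rintro z ⟨hz1, hz2⟩
  rw [show z = (z - killVars K D z) + killVars K D z by ring]
  exact add_mem (key z hz1) (hB hz2)

end Retraction

section CliqueDepth

variable {K : Type*} [Field K] {V : Type*}

/-- The ideal generated by all variables. -/
def varIdeal (K σ : Type*) [Field K] : Ideal (MvPolynomial σ K) :=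
  Ideal.span (Set.range X)

theorem X_mem_varIdeal {σ : Type*} (v : σ) : X v ∈ varIdeal K σ :=
  Ideal.subset_span ⟨v, rfl⟩

theorem span_le_cliqueIdeal_inl {A : Set V} (B : Set V) (c : V → ℕ) {i : V} (hi : i ∈ A) :
    Ideal.span {X (Sum.inl i)} ≤ cliqueIdeal K A B c :=
  (Ideal.span_singleton_le_iff_mem _).mpr (X_inl_mem_cliqueIdeal B c hi)

theorem cliqueIdeal_sup_span_inr {A B : Set V} (c : V → ℕ) {i : V} :
    cliqueIdeal K A B c ⊔ Ideal.span {X (Sum.inr i)} = cliqueIdeal K A (insert i B) c := by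
  apply le_antisymm
  · refine sup_le (cliqueIdeal_mono subset_rfl (Set.subset_insert i B)
      fun j k hj _ hj' _ ↦ absurd hj' hj) ?_
    exact (Ideal.span_singleton_le_iff_mem _).mpr (X_inr_mem_cliqueIdeal A c (Set.mem_insert i B))
  · refine cliqueIdeal_le_iff.mpr ⟨fun j hj ↦ Ideal.mem_sup_left (X_inl_mem_cliqueIdeal B c hj),
      ?_, fun j k hj hk h ↦ Ideal.mem_sup_left (edgeMinor_mem_cliqueIdeal B hj hk h)⟩
    rintro j (rfl | hj)
    · exact Ideal.mem_sup_right (Ideal.mem_span_singleton_self _)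
    · exact Ideal.mem_sup_left (X_inr_mem_cliqueIdeal A c hj)

theorem cliqueIdeal_sup_span_inl_of_singleton {A B : Set V} {c : V → ℕ} {i : V}
    (h : ∀ j, j ∉ A → c i = c j → j = i) :
    cliqueIdeal K A B c ⊔ Ideal.span {X (Sum.inl i)} = cliqueIdeal K (insert i A) B c := by
  apply le_antisymm
  · refine sup_le (cliqueIdeal_mono (Set.subset_insert i A) subset_rfl ?_)
      (span_le_cliqueIdeal_inl _ _ (Set.mem_insert i A))
    rintro j k hj hk (rfl | hj') hc
    · exact Or.inr (Or.inl (h k hk hc))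
    · exact absurd hj' hj
  · refine cliqueIdeal_le_iff.mpr ⟨?_, fun j hj ↦ Ideal.mem_sup_left (X_inr_mem_cliqueIdeal A c hj),
      fun j k hj hk h ↦ Ideal.mem_sup_left (edgeMinor_mem_cliqueIdeal B
        (fun h ↦ hj (Or.inr h)) (fun h ↦ hk (Or.inr h)) h)⟩
    rintro j (rfl | hj)
    · exact Ideal.mem_sup_right (Ideal.mem_span_singleton_self _)
    · exact Ideal.mem_sup_left (X_inl_mem_cliqueIdeal B c hj)

theorem cliqueIdeal_sup_span_inl {A B : Set V} (hBA : B ⊆ A) {c : V → ℕ} {i : V} (hi : i ∉ A) :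
    cliqueIdeal K A B c ⊔ Ideal.span {X (Sum.inl i)} =
      cliqueIdeal K (A ∪ {j | c j = c i}) B c ⊓
        cliqueIdeal K (insert i A) (insert i B) c := by
  apply le_antisymm
  · refine sup_le (le_inf (cliqueIdeal_mono Set.subset_union_left subset_rfl ?_)
      (cliqueIdeal_mono (Set.subset_insert i A) (Set.subset_insert i B) ?_))
      (le_inf (span_le_cliqueIdeal_inl _ _ (Or.inr rfl))
        (span_le_cliqueIdeal_inl _ _ (Set.mem_insert i A)))
    · rintro j k hj hk (hj' | hj') hc
      · exact absurd hj' hj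
      · exact Or.inr (Or.inr (hc.symm.trans hj'))
    · rintro j k hj hk (rfl | hj') hc
      · exact Or.inl (Set.mem_insert _ _)
      · exact absurd hj' hj
  · set J := cliqueIdeal K A B c ⊔ Ideal.span {X (Sum.inl i)} with hJ
    have hxi : X (Sum.inl i) ∈ J := Ideal.mem_sup_right (Ideal.mem_span_singleton_self _)
    have hx : ∀ j ∈ A, X (Sum.inl j) ∈ J :=
      fun j hj ↦ Ideal.mem_sup_left (X_inl_mem_cliqueIdeal B c hj)
    have hy : ∀ j ∈ B, X (Sum.inr j) ∈ J :=
      fun j hj ↦ Ideal.mem_sup_left (X_inr_mem_cliqueIdeal A c hj)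
    have hf : ∀ j k, j ∉ A → k ∉ A → c j = c k → edgeMinor K j k ∈ J :=
      fun j k hj hk h ↦ Ideal.mem_sup_left (edgeMinor_mem_cliqueIdeal B hj hk h)
    have hl : ∀ j : V, killVars K {Sum.inr i} (X (Sum.inl j)) = X (Sum.inl j) :=
      fun j ↦ killVars_X_of_notMem (by simp)
    have hr : ∀ j : V, j ≠ i → killVars K {(Sum.inr i : V ⊕ V)} (X (Sum.inr j)) = X (Sum.inr j) :=
      fun j hj ↦ killVars_X_of_notMem (by simpa using hj)
    have hm : ∀ j k : V, j ≠ i → k ≠ i →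
        killVars K {Sum.inr i} (edgeMinor K j k) = edgeMinor K j k := by
      intro j k hj hk
      simp only [edgeMinor, map_sub, map_mul, hl, hr j hj, hr k hk]
    refine span_inf_le_of_killVars {Sum.inr i} ?_ ?_ (cliqueIdeal_le_iff.mpr ⟨?_, ?_, ?_⟩)
    · rintro g ((⟨j, hj, rfl⟩ | ⟨j, hj, rfl⟩) | ⟨j, k, hj, hk, hc, rfl⟩)
      · simp [hl]
      · simp [hr j (fun h ↦ hi (hBA (h ▸ hj)))]
      · simp [hm j k (fun h ↦ hj (Or.inr (h ▸ rfl))) (fun h ↦ hk (Or.inr (h ▸ rfl)))]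
    · rintro g hg v rfl
      rcases hg with (⟨j, hj | hj, rfl⟩ | ⟨j, hj, rfl⟩) | ⟨j, k, hj, hk, hc, rfl⟩
      · exact Ideal.mul_mem_right _ _ (hx j hj)
      · by_cases hjA : j ∈ A
        · exact Ideal.mul_mem_right _ _ (hx j hjA)
        · rw [show (X (Sum.inl j) * X (Sum.inr i) : MvPolynomial (V ⊕ V) K) =
            edgeMinor K j i + X (Sum.inl i) * X (Sum.inr j) by simp [edgeMinor]]
          exact add_mem (hf j i hjA hi hj) (Ideal.mul_mem_right _ _ hxi)
      · exact Ideal.mul_mem_right _ _ (hy j hj)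
      · exact Ideal.mul_mem_right _ _ (hf j k (fun h ↦ hj (Or.inl h)) (fun h ↦ hk (Or.inl h)) hc)
    · rintro j (rfl | hj)
      · simpa [Ideal.mem_comap, hl] using hxi
      · simpa [Ideal.mem_comap, hl] using hx j hj
    · rintro j (rfl | hj)
      · simp [Ideal.mem_comap, killVars_X_of_mem]
      · simpa [Ideal.mem_comap, hr j (fun h ↦ hi (hBA (h ▸ hj)))] using hy j hj
    · intro j k hj hk hc
      rw [Set.mem_insert_iff, not_or] at hj hk
      rw [Ideal.mem_comap, hm j k hj.1 hk.1]
      exact hf j k hj.2 hk.2 hc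

theorem cliqueIdeal_sup_cliqueIdeal {A B : Set V} {c : V → ℕ} {i : V} :
    cliqueIdeal K (A ∪ {j | c j = c i}) B c ⊔ cliqueIdeal K (insert i A) (insert i B) c =
      cliqueIdeal K (A ∪ {j | c j = c i}) (insert i B) c := by
  have hsub : insert i A ⊆ A ∪ {j | c j = c i} := Set.insert_subset (Or.inr rfl)
    Set.subset_union_left
  apply le_antisymm
  · refine sup_le (cliqueIdeal_mono subset_rfl (Set.subset_insert i B) ?_)
      (cliqueIdeal_mono hsub subset_rfl ?_)
    · exact fun j k hj _ hj' _ ↦ absurd hj' hj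
    · rintro j k hj hk (hj' | hj') hc
      · exact absurd (Or.inr hj') hj
      · exact Or.inr (Or.inr (hc.symm.trans hj'))
  · refine cliqueIdeal_le_iff.mpr ⟨fun j hj ↦ Ideal.mem_sup_left (X_inl_mem_cliqueIdeal B c hj),
      fun j hj ↦ Ideal.mem_sup_right (X_inr_mem_cliqueIdeal _ c hj),
      fun j k hj hk h ↦ Ideal.mem_sup_left (edgeMinor_mem_cliqueIdeal B hj hk h)⟩

/-- The quotient by a clique ideal has depth at least its dimension. -/
theorem depthGE_cliqueIdeal [Fintype V] {A B : Set V} (hBA : B ⊆ A) (c : V → ℕ) {n : ℕ}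
    (hn : Bᶜ.ncard + (c '' Aᶜ).ncard = n) :
    DepthGE (varIdeal K (V ⊕ V)) n (MvPolynomial (V ⊕ V) K ⧸ cliqueIdeal K A B c) := by
  induction hd : Aᶜ.ncard + Bᶜ.ncard using Nat.strong_induction_on generalizing A B n with
  | _ d ih =>
  have hnzd : ∀ x : MvPolynomial (V ⊕ V) K, x ∉ cliqueIdeal K A B c →
      ∀ a, x * a ∈ cliqueIdeal K A B c → a ∈ cliqueIdeal K A B c := fun x hx a ha ↦
    ((cliqueIdeal_isPrime hBA c).mem_or_mem ha).resolve_left hx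
  have hcard : ∀ {s : Set V} {i : V}, i ∉ s → (insert i s)ᶜ.ncard + 1 = sᶜ.ncard := by
    intro s i hi
    have : (insert i s)ᶜ = sᶜ \ {i} := by ext; simp; tauto
    rw [this]
    exact Set.ncard_sdiff_singleton_add_one hi (Set.toFinite _)
  by_cases hA : A = Set.univ
  · by_cases hB : B = Set.univ
    · subst hA hB
      simp only [Set.compl_univ, Set.image_empty, Set.ncard_empty] at hn
      subst hn
      exact DepthGE.of_zero
    · obtain ⟨i, hi⟩ := (Set.ne_univ_iff_exists_notMem B).mp hB
      have h1 := hcard hi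
      obtain ⟨k, rfl⟩ : ∃ k, n = k + 1 := ⟨n - 1, by omega⟩
      refine DepthGE.quotient_of_sup_span (X_mem_varIdeal (Sum.inr i))
        (hnzd _ (by rwa [X_inr_mem_cliqueIdeal_iff hBA])) ?_
      rw [cliqueIdeal_sup_span_inr]
      exact ih _ (by omega) (by simp [hA]) (by omega) rfl
  · obtain ⟨i, hi⟩ := (Set.ne_univ_iff_exists_notMem A).mp hA
    have hiB : i ∉ B := fun h ↦ hi (hBA h)
    have h1 := hcard hi
    have h2 := hcard hiB
    have himg : (c '' (A ∪ {j | c j = c i})ᶜ).ncard + 1 = (c '' Aᶜ).ncard := by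
      have : c '' (A ∪ {j | c j = c i})ᶜ = c '' Aᶜ \ {c i} := by
        ext l
        constructor
        · rintro ⟨j, hj, rfl⟩
          exact ⟨⟨j, fun h ↦ hj (Or.inl h), rfl⟩, fun h ↦ hj (Or.inr h)⟩
        · rintro ⟨⟨j, hj, rfl⟩, h⟩
          exact ⟨j, fun h' ↦ h'.elim hj h, rfl⟩
      rw [this]
      exact Set.ncard_sdiff_singleton_add_one ⟨i, hi, rfl⟩ (Set.toFinite _)
    obtain ⟨k, rfl⟩ : ∃ k, n = k + 1 := ⟨n - 1, by omega⟩
    refine DepthGE.quotient_of_sup_span (X_mem_varIdeal (Sum.inl i))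
      (hnzd _ (by rwa [X_inl_mem_cliqueIdeal_iff hBA])) ?_
    by_cases hC : ∀ j, j ∉ A → c i = c j → j = i
    · rw [cliqueIdeal_sup_span_inl_of_singleton hC]
      have hins : insert i A = A ∪ {j | c j = c i} := by
        ext j
        constructor
        · rintro (rfl | hj)
          exacts [Or.inr rfl, Or.inl hj]
        · rintro (hj | hj)
          · exact Or.inr hj
          · exact (em (j ∈ A)).elim Or.inr fun h ↦ Or.inl (hC j h (Eq.symm hj))
      refine ih _ (by omega) (hBA.trans (Set.subset_insert i A)) ?_ rfl
      rw [hins]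
      omega
    · push Not at hC
      obtain ⟨j, hj, hcj, hji⟩ := hC
      obtain ⟨l, rfl⟩ : ∃ l, k = l + 1 := ⟨k - 1, by omega⟩
      have hsub : insert i A ⊆ A ∪ {j | c j = c i} := Set.insert_subset (Or.inr rfl)
        Set.subset_union_left
      have hle : (A ∪ {j | c j = c i})ᶜ.ncard ≤ (insert i A)ᶜ.ncard :=
        Set.ncard_le_ncard (Set.compl_subset_compl.mpr hsub) (Set.toFinite _)
      have himg2 : c '' (insert i A)ᶜ = c '' Aᶜ := by
        refine subset_antisymm (Set.image_mono (Set.compl_subset_compl.mpr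
          (Set.subset_insert i A))) ?_
        rintro _ ⟨v, hv, rfl⟩
        by_cases hvi : v = i
        · exact ⟨j, fun h ↦ h.elim hji hj, by rw [hvi, hcj]⟩
        · exact ⟨v, fun h ↦ h.elim hvi hv, rfl⟩
      rw [cliqueIdeal_sup_span_inl hBA hi]
      refine DepthGE.quotient_inf ?_ ?_ ?_
      · exact ih _ (by omega) (hBA.trans Set.subset_union_left) (by omega) rfl
      · refine ih _ (by omega) (Set.insert_subset_insert hBA) ?_ rfl
        rw [himg2]
        omega
      · rw [cliqueIdeal_sup_cliqueIdeal]
        exact ih _ (by omega) ((Set.insert_subset_insert hBA).trans hsub) (by omega) rfl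

end CliqueDepth

section RelIdeal

variable (K : Type*) [Field K] {V : Type*}

/-- The ideal generated by the variables `x_i, y_i` (`i ∈ T`), and the `2`-minors indexed by
pairs of related vertices outside `T`. -/
def relIdeal (T : Set V) (r : V → V → Prop) : Ideal (MvPolynomial (V ⊕ V) K) :=
  Ideal.span ({ f | ∃ i ∈ T, f = X (Sum.inl i) } ∪ { f | ∃ i ∈ T, f = X (Sum.inr i) } ∪
    { f | ∃ i j, i ∉ T ∧ j ∉ T ∧ r i j ∧ f = edgeMinor K i j })

variable {K}

theorem relIdeal_le_iff {T : Set V} {r : V → V → Prop} {I : Ideal (MvPolynomial (V ⊕ V) K)} :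
    relIdeal K T r ≤ I ↔ (∀ i ∈ T, X (Sum.inl i) ∈ I) ∧ (∀ i ∈ T, X (Sum.inr i) ∈ I) ∧
      ∀ i j, i ∉ T → j ∉ T → r i j → edgeMinor K i j ∈ I := by
  constructor
  · intro h
    exact ⟨fun i hi => h (Ideal.subset_span (Or.inl (Or.inl ⟨i, hi, rfl⟩))),
      fun i hi => h (Ideal.subset_span (Or.inl (Or.inr ⟨i, hi, rfl⟩))),
      fun i j hi hj hr => h (Ideal.subset_span (Or.inr ⟨i, j, hi, hj, hr, rfl⟩))⟩
  · rintro ⟨h1, h2, h3⟩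
    refine Ideal.span_le.2 ?_
    rintro f ((⟨i, hi, rfl⟩ | ⟨i, hi, rfl⟩) | ⟨i, j, hi, hj, hr, rfl⟩)
    exacts [h1 i hi, h2 i hi, h3 i j hi hj hr]

theorem relIdeal_eq_cliqueIdeal {T : Set V} {r : V → V → Prop} {c : V → ℕ}
    (h : ∀ i j, i ∉ T → j ∉ T → (c i = c j ↔ r i j ∨ i = j)) :
    relIdeal K T r = cliqueIdeal K T T c := by
  refine le_antisymm (relIdeal_le_iff.mpr ⟨fun i hi => X_inl_mem_cliqueIdeal _ _ hi,
    fun i hi => X_inr_mem_cliqueIdeal _ _ hi, fun i j hi hj hr =>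
      edgeMinor_mem_cliqueIdeal _ hi hj ((h i j hi hj).mpr (Or.inl hr))⟩) ?_
  obtain ⟨h1, h2, h3⟩ := relIdeal_le_iff.mp (le_refl (relIdeal K T r))
  refine cliqueIdeal_le_iff.mpr ⟨h1, h2, fun i j hi hj hc => ?_⟩
  rcases (h i j hi hj).mp hc with hr | rfl
  · exact h3 i j hi hj hr
  · simp [edgeMinor]

/-- The relation obtained by making the neighbours of `v` adjacent to each other. -/
def completeAt (r : V → V → Prop) (v i j : V) : Prop := r i j ∨ (r i v ∧ r v j)

theorem relIdeal_le_completeAt (T : Set V) (r : V → V → Prop) (v : V) :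
    relIdeal K T r ≤ relIdeal K T (completeAt r v) := by
  obtain ⟨h1, h2, h3⟩ := relIdeal_le_iff.mp (le_refl (relIdeal K T (completeAt r v)))
  exact relIdeal_le_iff.mpr ⟨h1, h2, fun i j hi hj hr => h3 i j hi hj (Or.inl hr)⟩

theorem relIdeal_le_insert (T : Set V) (r : V → V → Prop) (v : V) :
    relIdeal K T r ≤ relIdeal K (insert v T) r := by
  obtain ⟨h1, h2, h3⟩ := relIdeal_le_iff.mp (le_refl (relIdeal K (insert v T) r))
  refine relIdeal_le_iff.mpr ⟨fun i hi => h1 i (Or.inr hi), fun i hi => h2 i (Or.inr hi),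
    fun i j hi hj hr => ?_⟩
  by_cases hiv : i = v
  · subst hiv
    exact edgeMinor_mem_of_inl_inr_left (h1 i (Or.inl rfl)) (h2 i (Or.inl rfl)) j
  by_cases hjv : j = v
  · subst hjv
    exact edgeMinor_mem_swap.mpr
      (edgeMinor_mem_of_inl_inr_left (h1 j (Or.inl rfl)) (h2 j (Or.inl rfl)) i)
  · exact h3 i j (by simp [hiv, hi]) (by simp [hjv, hj]) hr

theorem relIdeal_completeAt_sup_insert (T : Set V) (r : V → V → Prop) (v : V) :
    relIdeal K T (completeAt r v) ⊔ relIdeal K (insert v T) r =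
      relIdeal K (insert v T) (completeAt r v) := by
  refine le_antisymm (sup_le (relIdeal_le_insert T _ v) (relIdeal_le_completeAt _ r v)) ?_
  obtain ⟨h1, h2, -⟩ := relIdeal_le_iff.mp (le_refl (relIdeal K (insert v T) r))
  obtain ⟨-, -, h3⟩ := relIdeal_le_iff.mp (le_refl (relIdeal K T (completeAt r v)))
  refine relIdeal_le_iff.mpr ⟨fun i hi => Ideal.mem_sup_right (h1 i hi),
    fun i hi => Ideal.mem_sup_right (h2 i hi), fun i j hi hj hr => Ideal.mem_sup_left ?_⟩
  exact h3 i j (fun h => hi (Or.inr h)) (fun h => hj (Or.inr h)) hr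

theorem killVars_edgeMinor_of_ne {v i j : V} (hi : i ≠ v) (hj : j ≠ v) :
    killVars K {Sum.inl v, Sum.inr v} (edgeMinor K i j) = edgeMinor K i j := by
  simp only [edgeMinor, map_sub, map_mul]
  repeat rw [killVars_X_of_notMem (by simp [hi, hj])]

theorem killVars_edgeMinor_left (v j : V) :
    killVars K {Sum.inl v, Sum.inr v} (edgeMinor K v j) = 0 := by
  simp only [edgeMinor, map_sub, map_mul]
  rw [killVars_X_of_mem (v := Sum.inl v) (by simp), killVars_X_of_mem (v := Sum.inr v) (by simp)]
  simp

theorem relIdeal_eq_completeAt_inf_insert {T : Set V} (r : V → V → Prop) {v : V} (hv : v ∉ T) :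
    relIdeal K T r = relIdeal K T (completeAt r v) ⊓ relIdeal K (insert v T) r := by
  refine le_antisymm (le_inf (relIdeal_le_completeAt T r v) (relIdeal_le_insert T r v)) ?_
  obtain ⟨h1, h2, h3⟩ := relIdeal_le_iff.mp (le_refl (relIdeal K T r))
  have hne : ∀ i ∈ T, i ≠ v := fun i hi h => hv (h ▸ hi)
  refine span_inf_le_of_killVars {Sum.inl v, Sum.inr v} ?_ ?_ ?_
  · rintro f ((⟨i, hi, rfl⟩ | ⟨i, hi, rfl⟩) | ⟨i, j, hi, hj, hr, rfl⟩)
    · rw [killVars_X_of_notMem (by simp [hne i hi]), sub_self]; exact zero_mem _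
    · rw [killVars_X_of_notMem (by simp [hne i hi]), sub_self]; exact zero_mem _
    · by_cases hiv : i = v
      · subst hiv
        rw [killVars_edgeMinor_left, sub_zero]
        exact h3 i j hi hj (hr.elim id And.right)
      by_cases hjv : j = v
      · subst hjv
        rw [edgeMinor_swap, map_neg, killVars_edgeMinor_left, neg_zero, sub_zero, ← edgeMinor_swap]
        exact h3 i j hi hj (hr.elim id And.left)
      · rw [killVars_edgeMinor_of_ne hiv hjv, sub_self]; exact zero_mem _
  · rintro f ((⟨i, hi, rfl⟩ | ⟨i, hi, rfl⟩) | ⟨i, j, hi, hj, hr | ⟨hr1, hr2⟩, rfl⟩) w hw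
    · exact Ideal.mul_mem_right _ _ (h1 i hi)
    · exact Ideal.mul_mem_right _ _ (h2 i hi)
    · exact Ideal.mul_mem_right _ _ (h3 i j hi hj hr)
    · have h4 := h3 i v hi hv hr1
      have h5 := h3 v j hv hj hr2
      rcases hw with rfl | rfl
      · rw [show edgeMinor K i j * X (Sum.inl v) =
          X (Sum.inl i) * edgeMinor K v j + X (Sum.inl j) * edgeMinor K i v by
            simp only [edgeMinor]; ring]
        exact add_mem (Ideal.mul_mem_left _ _ h5) (Ideal.mul_mem_left _ _ h4)
      · rw [show edgeMinor K i j * X (Sum.inr v) =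
          X (Sum.inr i) * edgeMinor K v j + X (Sum.inr j) * edgeMinor K i v by
            simp only [edgeMinor]; ring]
        exact add_mem (Ideal.mul_mem_left _ _ h5) (Ideal.mul_mem_left _ _ h4)
  · refine relIdeal_le_iff.mpr ⟨?_, ?_, fun i j hi hj hr => ?_⟩
    · rintro i (rfl | hi)
      · rw [Ideal.mem_comap, killVars_X_of_mem (by simp)]; exact zero_mem _
      · rw [Ideal.mem_comap, killVars_X_of_notMem (by simp [hne i hi])]; exact h1 i hi
    · rintro i (rfl | hi)
      · rw [Ideal.mem_comap, killVars_X_of_mem (by simp)]; exact zero_mem _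
      · rw [Ideal.mem_comap, killVars_X_of_notMem (by simp [hne i hi])]; exact h2 i hi
    · rw [Set.mem_insert_iff, not_or] at hi hj
      rw [Ideal.mem_comap, killVars_edgeMinor_of_ne hi.1 hj.1]
      exact h3 i j hi.2 hj.2 hr

theorem binomialEdgeIdeal_eq_relIdeal (G : SimpleGraph V) :
    binomialEdgeIdeal K G = relIdeal K ∅ G.Adj := by
  refine le_antisymm (binomialEdgeIdeal_le_iff.mpr fun i j hij => ?_) ?_
  · exact (relIdeal_le_iff.mp (le_refl (relIdeal K ∅ G.Adj))).2.2 i j (by simp) (by simp) hij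
  · exact relIdeal_le_iff.mpr ⟨by simp, by simp, fun i j _ _ hij =>
      binomialEdgeIdeal_le_iff.mp (le_refl (binomialEdgeIdeal K G)) i j hij⟩

end RelIdeal

section DepthCertificate

/-- The relation on the nine vertices encoded by a bitmask. -/
def maskRel (E : ℕ) (i j : Fin 9) : Prop := E.testBit (9 * i + j) = true

/-- The mask of the relation in which the neighbours of `v` become adjacent to each other. -/
def completeMask (v E : ℕ) : ℕ :=
  nineVertices.foldr (fun i acc => acc |||
    bif E.testBit (9 * i + v) then ((E >>> (9 * v)) % 512) <<< (9 * i) else 0) E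

theorem testBit_foldr_completeMask (E v : ℕ) (l : List ℕ) (n : ℕ) :
    (l.foldr (fun i acc => acc |||
      bif E.testBit (9 * i + v) then ((E >>> (9 * v)) % 512) <<< (9 * i) else 0) E).testBit n =
        true ↔ E.testBit n = true ∨ ∃ i ∈ l, E.testBit (9 * i + v) = true ∧ 9 * i ≤ n ∧
          n - 9 * i < 9 ∧ E.testBit (9 * v + (n - 9 * i)) = true := by
  induction l with
  | nil => simp
  | cons a l ih =>
    rw [List.foldr_cons, Nat.testBit_or, Bool.or_eq_true, ih]
    have : (bif E.testBit (9 * a + v) then ((E >>> (9 * v)) % 512) <<< (9 * a) else 0).testBit n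
        = true ↔ E.testBit (9 * a + v) = true ∧ 9 * a ≤ n ∧
        n - 9 * a < 9 ∧ E.testBit (9 * v + (n - 9 * a)) = true := by
      cases E.testBit (9 * a + v)
      · simp
      · rw [cond_true, Nat.testBit_shiftLeft, show (512 : ℕ) = 2 ^ 9 from rfl,
          Nat.testBit_mod_two_pow, Nat.testBit_shiftRight]
        simp
    rw [this, or_assoc]
    refine or_congr_right ?_
    simp only [List.mem_cons, exists_eq_or_imp]
    exact or_comm

theorem maskRel_completeMask (E : ℕ) (v : Fin 9) :
    maskRel (completeMask v E) = completeAt (maskRel E) v := by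
  funext i j
  refine propext ((testBit_foldr_completeMask E v nineVertices (9 * i + j)).trans
    (or_congr_right ?_))
  constructor
  · rintro ⟨a, -, h1, h2, h3, h4⟩
    obtain rfl : a = i := by omega
    exact ⟨h1, by simpa [maskRel] using h4⟩
  · rintro ⟨h1, h2⟩
    refine ⟨i, mem_nineVertices i, h1, by omega, by omega, ?_⟩
    rwa [Nat.add_sub_cancel_left]

/-- The mask of the closed neighbourhood of a vertex, away from the vertices in the mask `T`. -/
def closedNbhd (T E i : ℕ) : ℕ := (((E >>> (9 * i)) % 512) ||| 2 ^ i) &&& (T ^^^ 511)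

/-- Decides whether the neighbourhood of a vertex is not a clique. -/
def isInternal (T E v : ℕ) : Bool :=
  !T.testBit v && forceNat (fun N => nineVertices.any fun i =>
    N.testBit i && !Nat.beq (closedNbhd T E i &&& N) N) (closedNbhd T E v)

/-- Decides whether the graph is a disjoint union of cliques with enough vertices and
components. -/
def isCliqueUnion (T E d : ℕ) : Bool :=
  (nineVertices.all fun i => T.testBit i || forceNat (fun N => nineVertices.all fun j =>
    T.testBit j || (Nat.beq N (closedNbhd T E j) == (E.testBit (9 * i + j) || Nat.beq i j)))
      (closedNbhd T E i)) &&
  Nat.ble d ((nineVertices.countP fun i => !T.testBit i) +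
    nineVertices.countP fun i => !T.testBit i && Nat.beq (closedNbhd T E i % 2 ^ i) 0)

/-- Decides whether the recursive decomposition along internal vertices shows that the depth
is at least `d`. -/
def depthCheck : ℕ → ℕ → ℕ → ℕ → Bool
  | 0, _, _, _ => false
  | n + 1, T, E, d =>
    match [0, 5, 4, 7, 6, 8, 2, 1, 3].find? (isInternal T E) with
    | none => isCliqueUnion T E d
    | some v => !T.testBit v && Nat.blt v 9 && Nat.blt 0 d &&
        forceNat (fun E' => forceNat (fun T' => depthCheck n T E' d && depthCheck n T' E d &&
          forceNat (depthCheck n T' E') (d - 1)) (T ||| 2 ^ v)) (completeMask v E)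

/-- The mask of the adjacency relation of `nineVertexExample`. -/
def nineAdjMask : ℕ :=
  nineEdgesNat.foldr (fun e acc => acc ||| 2 ^ (9 * e.1 + e.2) ||| 2 ^ (9 * e.2 + e.1)) 0

theorem maskRel_nineAdjMask : maskRel nineAdjMask = nineVertexExample.Adj := by
  have h : ∀ i j : Fin 9, nineAdjMask.testBit (9 * i + j) = true ↔
      (i, j) ∈ nineEdges ∨ (j, i) ∈ nineEdges := by decide +kernel
  funext i j
  exact propext ((h i j).trans nineVertexExample_adj.symm)

theorem ncard_setOf_eq_countP (p : ℕ → Bool) :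
    {i : Fin 9 | p i = true}.ncard = nineVertices.countP p := by
  rw [← Set.ncard_image_of_injective _ Fin.val_injective, List.countP_eq_length_filter,
    ← List.toFinset_card_of_nodup ((by decide : nineVertices.Nodup).filter _),
    ← Set.ncard_coe_finset]
  congr 1
  ext a
  simp only [Set.mem_image, List.coe_toFinset, List.mem_filter, Set.mem_ofPred_eq]
  constructor
  · rintro ⟨i, hi, rfl⟩
    exact ⟨mem_nineVertices i, hi⟩
  · rintro ⟨ha, hp⟩
    obtain ⟨i, rfl⟩ := exists_fin_of_mem_nineVertices ha
    exact ⟨i, hp, rfl⟩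

theorem testBit_closedNbhd_self {T : ℕ} (E : ℕ) {i : Fin 9} (hi : T.testBit i = false) :
    (closedNbhd T E i).testBit i = true := by
  have h : (511 : ℕ).testBit i = true :=
    (by decide : ∀ i : Fin 9, (511 : ℕ).testBit i = true) i
  simp [closedNbhd, hi, h]

variable {K : Type*} [Field K]

theorem isCliqueUnion_sound {T E d : ℕ} (h : isCliqueUnion T E d = true) :
    (relIdeal K (maskSet T) (maskRel E)).IsRadical ∧
      DepthGE (varIdeal K (Fin 9 ⊕ Fin 9)) d
        (MvPolynomial (Fin 9 ⊕ Fin 9) K ⧸ relIdeal K (maskSet T) (maskRel E)) := by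
  simp only [isCliqueUnion, forceNat_eq, Bool.and_eq_true, List.all_eq_true, Bool.or_eq_true,
    beq_iff_eq, Nat.ble_eq] at h
  obtain ⟨h1, h2⟩ := h
  have hc : ∀ i j : Fin 9, i ∉ maskSet T → j ∉ maskSet T →
      (closedNbhd T E i = closedNbhd T E j ↔ maskRel E i j ∨ i = j) := by
    intro i j hi hj
    have h3 := ((h1 i (mem_nineVertices i)).resolve_left hi j (mem_nineVertices j)).resolve_left hj
    rw [← Nat.beq_eq, h3, Bool.or_eq_true, Nat.beq_eq, Fin.val_inj, maskRel]
  rw [relIdeal_eq_cliqueIdeal (c := fun i : Fin 9 => closedNbhd T E i) hc]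
  refine ⟨(cliqueIdeal_isPrime subset_rfl _).isRadical,
    (depthGE_cliqueIdeal subset_rfl _ rfl).mono (h2.trans (Nat.add_le_add ?_ ?_))⟩
  · rw [← ncard_setOf_eq_countP]
    refine Set.ncard_le_ncard (fun i hi => ?_) (Set.toFinite _)
    simpa [mem_maskSet] using hi
  · rw [← ncard_setOf_eq_countP]
    refine Set.ncard_le_ncard_of_injOn (fun i : Fin 9 => closedNbhd T E i) ?_ ?_ (Set.toFinite _)
    · intro i hi
      refine ⟨i, ?_, rfl⟩
      simp only [Set.mem_ofPred_eq, Bool.and_eq_true, Bool.not_eq_true'] at hi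
      simp [mem_maskSet, hi.1]
    · have key : ∀ i j : Fin 9, T.testBit i = false → closedNbhd T E j % 2 ^ (j : ℕ) = 0 →
          closedNbhd T E i = closedNbhd T E j → j ≤ i := by
        intro i j hi hj hij
        by_contra hlt
        have h3 := testBit_closedNbhd_self E hi
        have h4 := Nat.testBit_mod_two_pow (closedNbhd T E j) j i
        rw [hj, ← hij, h3, Nat.zero_testBit] at h4
        simp only [Bool.and_true] at h4
        exact hlt (Fin.le_def.mpr (not_lt.mp (of_decide_eq_false h4.symm)))
      intro i hi j hj hij
      simp only [Set.mem_ofPred_eq, Bool.and_eq_true, Bool.not_eq_true', Nat.beq_eq] at hi hj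
      exact le_antisymm (key j i hj.1 hi.2 hij.symm) (key i j hi.1 hj.2 hij)

theorem maskSet_or_two_pow (T : ℕ) (v : Fin 9) :
    maskSet (T ||| 2 ^ (v : ℕ)) = insert v (maskSet T) := by
  ext i
  simp only [mem_maskSet, Nat.testBit_or, Nat.testBit_two_pow, Bool.or_eq_true, decide_eq_true_eq,
    Set.mem_insert_iff, Fin.ext_iff]
  rw [or_comm, eq_comm]

theorem depthCheck_sound {n T E d : ℕ} (h : depthCheck n T E d = true) :
    (relIdeal K (maskSet T) (maskRel E)).IsRadical ∧
      DepthGE (varIdeal K (Fin 9 ⊕ Fin 9)) d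
        (MvPolynomial (Fin 9 ⊕ Fin 9) K ⧸ relIdeal K (maskSet T) (maskRel E)) := by
  induction n generalizing T E d with
  | zero => simp [depthCheck] at h
  | succ n ih =>
    rw [depthCheck] at h
    split at h
    · exact isCliqueUnion_sound h
    · rename_i v _
      simp only [forceNat_eq, Bool.and_eq_true, Bool.not_eq_true', Nat.blt_eq] at h
      obtain ⟨⟨⟨hT, hv⟩, hd⟩, ⟨h1, h2⟩, h3⟩ := h
      lift v to Fin 9 using hv
      obtain ⟨k, rfl⟩ := Nat.exists_eq_succ_of_ne_zero hd.ne'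
      have ih1 := ih h1
      have ih2 := ih h2
      have ih3 := (ih h3).2
      rw [maskRel_completeMask] at ih1 ih3
      rw [maskSet_or_two_pow] at ih2 ih3
      have hvT : v ∉ maskSet T := by simp [mem_maskSet, hT]
      rw [← relIdeal_completeAt_sup_insert] at ih3
      rw [relIdeal_eq_completeAt_inf_insert _ hvT]
      exact ⟨ih1.1.inf ih2.1, ih1.2.quotient_inf ih2.2 ih3⟩

theorem depthCheck_nineAdjMask : depthCheck 60 0 nineAdjMask 9 = true := by decide +kernel

theorem isRadical_and_depthGE_nineVertexExample (K : Type*) [Field K] :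
    (binomialEdgeIdeal K nineVertexExample).IsRadical ∧
      DepthGE (varIdeal K (Fin 9 ⊕ Fin 9)) 9
        (MvPolynomial (Fin 9 ⊕ Fin 9) K ⧸ binomialEdgeIdeal K nineVertexExample) := by
  have h := depthCheck_sound (K := K) depthCheck_nineAdjMask
  have h0 : maskSet 0 = ∅ := by ext i; simp [mem_maskSet]
  rwa [maskRel_nineAdjMask, h0, ← binomialEdgeIdeal_eq_relIdeal] at h

end DepthCertificate

section VarIdeal

variable {K : Type*} [Field K] {V : Type*}

theorem varIdeal_eq_cliqueIdeal (c : V → ℕ) :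
    varIdeal K (V ⊕ V) = cliqueIdeal K Set.univ Set.univ c := by
  refine le_antisymm (Ideal.span_le.mpr ?_) (cliqueIdeal_le_iff.mpr
    ⟨fun _ _ => X_mem_varIdeal _, fun _ _ => X_mem_varIdeal _, fun _ _ hi => absurd trivial hi⟩)
  rintro _ ⟨i | i, rfl⟩
  · exact X_inl_mem_cliqueIdeal _ _ trivial
  · exact X_inr_mem_cliqueIdeal _ _ trivial

instance varIdeal_isPrime [Fintype V] : (varIdeal K (V ⊕ V)).IsPrime := by
  rw [varIdeal_eq_cliqueIdeal fun _ => 0]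
  exact cliqueIdeal_isPrime subset_rfl _

theorem cliqueIdeal_le_varIdeal (A B : Set V) (c : V → ℕ) :
    cliqueIdeal K A B c ≤ varIdeal K (V ⊕ V) :=
  cliqueIdeal_le_iff.mpr ⟨fun _ _ => X_mem_varIdeal _, fun _ _ => X_mem_varIdeal _,
    fun _ j _ _ _ => edgeMinor_mem_of_inl_inr_left (X_mem_varIdeal _) (X_mem_varIdeal _) j⟩

end VarIdeal

section DepthUpperBound

/-- Let `J` be contained in the primes `A` and `B`, with `g * (A ⊓ B) ≤ J` for some `g` outside
the prime `A ⊔ B`, and let `a + b` be a nonzerodivisor modulo `J` with `a ∈ A`, `b ∈ B`. Then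
`R ⧸ J` has depth at most `dim R ⧸ (A ⊔ B) + 1`. -/
theorem DepthGE.le_coheight_of_sup_prime {R : Type*} [CommRing R] [IsNoetherianRing R]
    {m J A B : Ideal R} [hm : m.IsPrime] (hA : A.IsPrime) (hB : B.IsPrime) (P : PrimeSpectrum R)
    (hP : P.asIdeal = A ⊔ B) (hPm : P.asIdeal ≤ m) (hJA : J ≤ A) (hJB : J ≤ B) {g a b : R}
    (hg : g ∉ P.asIdeal) (hgJ : ∀ z ∈ A ⊓ B, g * z ∈ J) (ha : a ∈ A) (hb : b ∈ B) (haB : a ∉ B)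
    (hbA : b ∉ A) (hab : ∀ c, (a + b) * c ∈ J → c ∈ J) {k : ℕ} (h : DepthGE m (k + 1) (R ⧸ J)) :
    (k : ℕ∞) ≤ Order.coheight P := by
  have hAP : A ≤ P.asIdeal := hP ▸ le_sup_left
  have hBP : B ≤ P.asIdeal := hP ▸ le_sup_right
  have hI : J ⊔ Ideal.span {a + b} ≤ m := by
    refine sup_le (hJA.trans (hAP.trans hPm)) ((Ideal.span_singleton_le_iff_mem _).mpr ?_)
    exact hPm (add_mem (hAP ha) (hBP hb))
  obtain ⟨rs, rfl, hrs, hreg⟩ := (h.quotient_sup_span hab).exists_isRegular hI hm.ne_top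
  refine length_le_coheight_of_isWeaklyRegular hrs hreg.toIsWeaklyRegular P
    (u := Ideal.Quotient.mk _ (g * a)) ?_ ?_
  · intro p hp
    rw [hP] at hp
    obtain ⟨α, hα, β, hβ, rfl⟩ := Submodule.mem_sup.mp hp
    rw [Algebra.smul_def, Ideal.Quotient.algebraMap_eq, ← map_mul, Ideal.Quotient.eq_zero_iff_mem]
    rw [show (α + β) * (g * a) = (g * (β * a) - g * (α * b)) + g * α * (a + b) by ring]
    refine Submodule.add_mem_sup (sub_mem (hgJ _ ⟨?_, ?_⟩) (hgJ _ ⟨?_, ?_⟩))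
      (Ideal.mul_mem_left _ _ (Ideal.mem_span_singleton_self _))
    · exact Ideal.mul_mem_left _ _ ha
    · exact Ideal.mul_mem_right _ _ hβ
    · exact Ideal.mul_mem_right _ _ hα
    · exact Ideal.mul_mem_left _ _ hb
  · intro s hs
    rw [Algebra.smul_def, Ideal.Quotient.algebraMap_eq, ← map_mul,
      Ideal.Quotient.eq_zero_iff_mem] at hs
    obtain ⟨z, hz, y, hy, hzy⟩ := Submodule.mem_sup.mp hs
    obtain ⟨t, rfl⟩ := Ideal.mem_span_singleton'.mp hy
    have h1 : t * b ∈ A := by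
      rw [show t * b = (s * g - t) * a - z by linear_combination hzy]
      exact sub_mem (Ideal.mul_mem_left _ _ ha) (hJA hz)
    have h2 : (s * g - t) * a ∈ B := by
      rw [show (s * g - t) * a = z + t * b by linear_combination -hzy]
      exact add_mem (hJB hz) (Ideal.mul_mem_left _ _ hb)
    have h3 : s * g ∈ P.asIdeal := by
      rw [show s * g = t + (s * g - t) by ring]
      exact add_mem (hAP ((hA.mem_or_mem h1).resolve_right hbA))
        (hBP ((hB.mem_or_mem h2).resolve_right haB))
    exact hPm ((P.2.mem_or_mem h3).resolve_right hg)

variable {K : Type*} [Field K]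

theorem mem_binomialEdgeIdeal_iff {f : MvPolynomial (Fin 9 ⊕ Fin 9) K} :
    f ∈ binomialEdgeIdeal K nineVertexExample ↔ ∀ m ∈ cutMasks, f ∈ maskPrime K m := by
  refine ⟨fun hf m _ => binomialEdgeIdeal_le_maskPrime m hf, fun hf => ?_⟩
  rw [← (isRadical_and_depthGE_nineVertexExample K).1.radical, Ideal.radical_eq_sInf,
    Submodule.mem_sInf]
  rintro Q ⟨hJ, hQ⟩
  obtain ⟨m, hm, hle⟩ := exists_maskPrime_le hQ hJ
  exact hle (hf m hm)

theorem binomialEdgeIdeal_le_varIdeal :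
    binomialEdgeIdeal K nineVertexExample ≤ varIdeal K (Fin 9 ⊕ Fin 9) :=
  (binomialEdgeIdeal_le_maskPrime 0).trans (cliqueIdeal_le_varIdeal _ _ _)

variable (K) in
/-- The prime generated by the variables at the vertices `2`, `4` and all `2`-minors. -/
def sumPoint : PrimeSpectrum (MvPolynomial (Fin 9 ⊕ Fin 9) K) :=
  ⟨cliqueIdeal K (maskSet 20) (maskSet 20) fun _ => 0, cliqueIdeal_isPrime subset_rfl _⟩

theorem sumPoint_eq_sup : (sumPoint K).asIdeal = maskPrime K 0 ⊔ maskPrime K 20 := by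
  have h0 : ∀ i j : Fin 9, compLabel 0 i = compLabel 0 j := by decide +kernel
  have hn : ∀ i, i ∉ maskSet 0 := by intro i; simp [mem_maskSet]
  refine le_antisymm (cliqueIdeal_le_iff.mpr ⟨fun i hi => Ideal.mem_sup_right ?_,
    fun i hi => Ideal.mem_sup_right ?_, fun i j _ _ _ => Ideal.mem_sup_left ?_⟩) (sup_le ?_ ?_)
  · exact X_inl_mem_cliqueIdeal _ _ hi
  · exact X_inr_mem_cliqueIdeal _ _ hi
  · exact edgeMinor_mem_cliqueIdeal _ (hn i) (hn j) (h0 i j)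
  · refine cliqueIdeal_le_iff.mpr ⟨fun i hi => absurd hi (hn i), fun i hi => absurd hi (hn i),
      fun i j _ _ _ => ?_⟩
    by_cases hi : i ∈ maskSet 20
    · exact edgeMinor_mem_of_inl_inr_left (X_inl_mem_cliqueIdeal _ _ hi)
        (X_inr_mem_cliqueIdeal _ _ hi) _
    by_cases hj : j ∈ maskSet 20
    · exact edgeMinor_mem_swap.mpr (edgeMinor_mem_of_inl_inr_left (X_inl_mem_cliqueIdeal _ _ hj)
        (X_inr_mem_cliqueIdeal _ _ hj) _)
    · exact edgeMinor_mem_cliqueIdeal _ hi hj rfl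
  · exact cliqueIdeal_le_iff.mpr ⟨fun i hi => X_inl_mem_cliqueIdeal _ _ hi,
      fun i hi => X_inr_mem_cliqueIdeal _ _ hi, fun i j hi hj _ =>
        edgeMinor_mem_cliqueIdeal _ hi hj rfl⟩

variable [CharZero K]

theorem coheight_sumPoint_le : Order.coheight (sumPoint K) ≤ 8 := by
  have hT : (maskSet 20).ncard = 2 := (ncard_setOf_eq_countP (Nat.testBit 20)).trans (by decide)
  have hc := ncard_add_ncard_compl_maskSet 20
  have h1 : (10 : ℕ∞) ≤ Order.height (sumPoint K) := by
    refine le_height_cliqueIdeal 10 _ _ ?_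
    have : (maskSet 20)ᶜ.Nonempty := ⟨0, by simp [mem_maskSet]⟩
    rw [this.image_const, Set.ncard_singleton]
    omega
  have h2 := height_add_coheight_le (sumPoint K)
  simp only [Nat.card_eq_fintype_card, Fintype.card_sum, Fintype.card_fin] at h2
  rw [add_comm] at h2
  exact enat_le_of_add_le (m := 8) (n := 10) h2 h1

theorem not_depthGE_ten_nineVertexExample : ¬ DepthGE (varIdeal K (Fin 9 ⊕ Fin 9)) 10
    (MvPolynomial (Fin 9 ⊕ Fin 9) K ⧸ binomialEdgeIdeal K nineVertexExample) := by
  intro h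
  have h20 : ∀ i : Fin 9, i ∈ maskSet 20 ↔ i = 2 ∨ i = 4 := by
    simp only [mem_maskSet]; decide
  have h9 := h.le_coheight_of_sup_prime (k := 9) (maskPrime_isPrime K 0) (maskPrime_isPrime K 20)
    (sumPoint K) sumPoint_eq_sup (cliqueIdeal_le_varIdeal _ _ _)
    (binomialEdgeIdeal_le_maskPrime 0) (binomialEdgeIdeal_le_maskPrime 20)
    (g := X (Sum.inl 1) * X (Sum.inl 5) * X (Sum.inl 6)) (a := edgeMinor K 1 3)
    (b := X (Sum.inl 2) + X (Sum.inl 4)) ?_ ?_ ?_ ?_ ?_ ?_ ?_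
  · exact absurd (h9.trans coheight_sumPoint_le) (by decide)
  · intro hg
    rcases (sumPoint K).2.mem_or_mem hg with hg | hg
    · rcases (sumPoint K).2.mem_or_mem hg with hg | hg
      · exact absurd ((X_inl_mem_cliqueIdeal_iff subset_rfl _).mp hg) (by rw [h20]; decide)
      · exact absurd ((X_inl_mem_cliqueIdeal_iff subset_rfl _).mp hg) (by rw [h20]; decide)
    · exact absurd ((X_inl_mem_cliqueIdeal_iff subset_rfl _).mp hg) (by rw [h20]; decide)
  · intro z hz
    refine mem_binomialEdgeIdeal_iff.mpr fun m hm => ?_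
    have hcases : ∀ m ∈ cutMasks, m = 0 ∨ m = 20 ∨ m.testBit 1 = true ∨ m.testBit 5 = true ∨
        m.testBit 6 = true := by decide
    rcases hcases m hm with rfl | rfl | h1 | h5 | h6
    · exact Ideal.mul_mem_left _ _ hz.1
    · exact Ideal.mul_mem_left _ _ hz.2
    · exact Ideal.mul_mem_right _ _ (Ideal.mul_mem_right _ _ (Ideal.mul_mem_right _ _
        (X_inl_mem_cliqueIdeal _ _ (mem_maskSet.mpr h1))))
    · exact Ideal.mul_mem_right _ _ (Ideal.mul_mem_right _ _ (Ideal.mul_mem_left _ _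
        (X_inl_mem_cliqueIdeal _ _ (mem_maskSet.mpr h5))))
    · exact Ideal.mul_mem_right _ _ (Ideal.mul_mem_left _ _
        (X_inl_mem_cliqueIdeal _ _ (mem_maskSet.mpr h6)))
  · exact edgeMinor_mem_cliqueIdeal _ (by simp [mem_maskSet]) (by simp [mem_maskSet])
      (by decide +kernel)
  · exact add_mem (X_inl_mem_cliqueIdeal _ _ ((h20 2).mpr (by decide)))
      (X_inl_mem_cliqueIdeal _ _ ((h20 4).mpr (by decide)))
  · exact edgeMinor_notMem_cliqueIdeal (by rw [h20]; decide) (by rw [h20]; decide)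
      (by decide +kernel)
  · intro hb
    classical
    have := cliqueEval_eq_zero hb
    rw [map_add, cliqueEval_X_inl, cliqueEval_X_inl] at this
    norm_num [mem_maskSet] at this
  · intro c hc
    refine mem_binomialEdgeIdeal_iff.mpr fun m hm => ?_
    have hmem := mem_binomialEdgeIdeal_iff.mp hc m hm
    refine ((maskPrime_isPrime K m).mem_or_mem hmem).resolve_left fun hw => ?_
    classical
    have hw0 := cliqueEval_eq_zero hw
    simp only [edgeMinor, map_add, map_sub, map_mul, cliqueEval_X_inl, cliqueEval_X_inr,
      mem_maskSet] at hw0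
    have hne : ∀ m ∈ cutMasks, (if m.testBit (1 : Fin 9) = true then (0 : ℤ) else 1) *
        (if m.testBit (3 : Fin 9) = true then 0 else (compLabel m 3 : ℤ)) -
        (if m.testBit (3 : Fin 9) = true then 0 else 1) *
        (if m.testBit (1 : Fin 9) = true then 0 else (compLabel m 1 : ℤ)) +
        ((if m.testBit (2 : Fin 9) = true then 0 else 1) +
          (if m.testBit (4 : Fin 9) = true then 0 else 1)) ≠ 0 := by decide +kernel
    apply hne m hm
    rw [← Int.cast_inj (α := K)]
    push_cast
    exact hw0

end DepthUpperBound

section Depth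

variable {K : Type*} [Field K] [CharZero K]

theorem ringDepth_nineVertexExample :
    ringDepth (MvPolynomial (Fin 9 ⊕ Fin 9) K ⧸ binomialEdgeIdeal K nineVertexExample)
      (gradedMaxQuot (binomialEdgeIdeal K nineVertexExample)) = 9 := by
  have hm : varIdeal K (Fin 9 ⊕ Fin 9) ≠ ⊤ := varIdeal_isPrime.ne_top
  have hJ := binomialEdgeIdeal_le_varIdeal (K := K)
  apply le_antisymm
  · refine sSup_le ?_
    rintro _ ⟨l, rfl, hl, hreg⟩
    by_contra! hlt
    obtain ⟨rs, rfl⟩ := List.map_surjective_iff.mpr (Ideal.Quotient.mk_surjective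
      (I := binomialEdgeIdeal K nineVertexExample)) l
    have hrs : ∀ r ∈ rs, r ∈ varIdeal K (Fin 9 ⊕ Fin 9) := by
      intro r hr
      have h1 := (Ideal.mem_map_iff_of_surjective _ Ideal.Quotient.mk_surjective).mp
        (hl _ (List.mem_map_of_mem hr))
      obtain ⟨s, hs, hsr⟩ := h1
      rw [← sub_sub_cancel s r]
      exact sub_mem hs (hJ (Ideal.Quotient.eq.mp hsr))
    refine not_depthGE_ten_nineVertexExample
      ((DepthGE.of_isRegular hJ hm hrs (isRegular_map_mk_iff.mp hreg)).mono ?_)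
    rw [List.length_map] at hlt
    exact_mod_cast hlt
  · obtain ⟨rs, hlen, hrs, hreg⟩ :=
      (isRadical_and_depthGE_nineVertexExample K).2.exists_isRegular hJ hm
    refine le_sSup ⟨rs.map (Ideal.Quotient.mk _), by simp [hlen], ?_, isRegular_map_mk_iff.mpr hreg⟩
    intro x hx
    obtain ⟨r, hr, rfl⟩ := List.mem_map.mp hx
    exact Ideal.mem_map_of_mem _ (hrs r hr)

end Depth

theorem setOf_hasCutpointProperty_eq :
    {T : Set (Fin 9) | HasCutpointProperty nineVertexExample T} =
      ({∅, {1}, {5}, {6}, {1, 5}, {1, 6}, {2, 4}, {2, 6}, {4, 5}, {5, 6},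
        {1, 2, 6}, {1, 3, 5}, {1, 3, 6}, {1, 4, 5}, {1, 5, 6}, {2, 4, 5},
        {2, 4, 6}, {1, 3, 5, 6}} : Set (Set (Fin 9))) := by
  have key : ∀ (k : ℕ) (s : Finset (Fin 9)), (∀ i : Fin 9, k.testBit i = true ↔ i ∈ s) →
      maskSet k = s := fun k s h => Set.ext h
  have hmasks : {k | k ∈ cutMasks} =
      ({0, 2, 32, 64, 34, 66, 20, 68, 48, 96, 70, 42, 74, 50, 98, 52, 84, 106} : Set ℕ) := by
    ext k
    simp [cutMasks]
  have h0 := key 0 ∅ (by decide)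
  have h1 := key 2 {1} (by decide)
  have h2 := key 32 {5} (by decide)
  have h3 := key 64 {6} (by decide)
  have h4 := key 34 {1, 5} (by decide)
  have h5 := key 66 {1, 6} (by decide)
  have h6 := key 20 {2, 4} (by decide)
  have h7 := key 68 {2, 6} (by decide)
  have h8 := key 48 {4, 5} (by decide)
  have h9 := key 96 {5, 6} (by decide)
  have h10 := key 70 {1, 2, 6} (by decide)
  have h11 := key 42 {1, 3, 5} (by decide)
  have h12 := key 74 {1, 3, 6} (by decide)
  have h13 := key 50 {1, 4, 5} (by decide)
  have h14 := key 98 {1, 5, 6} (by decide)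
  have h15 := key 52 {2, 4, 5} (by decide)
  have h16 := key 84 {2, 4, 6} (by decide)
  have h17 := key 106 {1, 3, 5, 6} (by decide)
  push_cast at h0 h1 h2 h3 h4 h5 h6 h7 h8 h9 h10 h11 h12 h13 h14 h15 h16 h17
  rw [setOf_hasCutpointProperty, hmasks]
  simp only [Set.image_insert_eq, Set.image_singleton]
  rw [h0, h1, h2, h3, h4, h5, h6, h7, h8, h9, h10, h11, h12, h13, h14, h15, h16, h17]

/-- For the graph `G` above (over `K = ℚ`), `𝒞(G)` is the explicit
`18`-element family listed below, the ideal `J_G` is unmixed of deviation `2`,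
`dim S/J_G = 10` and `depth S/J_G = 9`; in particular `S/J_G` is not
Cohen–Macaulay. -/
theorem nineVertexExample_unmixed_not_CM :
    {T : Set (Fin 9) | HasCutpointProperty nineVertexExample T} =
      ({∅, {1}, {5}, {6}, {1, 5}, {1, 6}, {2, 4}, {2, 6}, {4, 5}, {5, 6},
        {1, 2, 6}, {1, 3, 5}, {1, 3, 6}, {1, 4, 5}, {1, 5, 6}, {2, 4, 5},
        {2, 4, 6}, {1, 3, 5, 6}} : Set (Set (Fin 9))) ∧
    IsUnmixed (binomialEdgeIdeal ℚ nineVertexExample) ∧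
    (mu (binomialEdgeIdeal ℚ nineVertexExample) : ℕ∞) =
      htI (binomialEdgeIdeal ℚ nineVertexExample) + 2 ∧
    ringKrullDim (MvPolynomial (Fin 9 ⊕ Fin 9) ℚ ⧸ binomialEdgeIdeal ℚ nineVertexExample) = 10 ∧
    ringDepth (MvPolynomial (Fin 9 ⊕ Fin 9) ℚ ⧸ binomialEdgeIdeal ℚ nineVertexExample)
      (gradedMaxQuot (binomialEdgeIdeal ℚ nineVertexExample)) = 9 ∧
    ¬ IsCMQuot (binomialEdgeIdeal ℚ nineVertexExample) := by
  refine ⟨setOf_hasCutpointProperty_eq, isUnmixed_nineVertexExample, ?_,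
    ringKrullDim_nineVertexExample, ringDepth_nineVertexExample, fun h => ?_⟩
  · rw [mu_nineVertexExample, htI_nineVertexExample]
    rfl
  · rw [IsCMQuot, ringDepth_nineVertexExample, ringKrullDim_nineVertexExample] at h
    exact absurd (WithBot.coe_inj.mp h : (9 : ℕ∞) = 10) (by decide)

end
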